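/- arXiv:dg-ga/9609001 — 5 statements merged into one kernel-verified Lean document; each statement's English description precedes it below -/
import Mathlib

section
/- Let f : (0,∞) → ℂ be continuous and suppose there are C, ε > 0 with |f(t)| ≤ C e^{-εt} for all t ≥ 1. Let (α, k, a) be expansion data for f, i.e. α : ℕ → ℂ is injective with Re α_j nondecreasing and tending to +∞, k : ℕ → ℕ, a : ℕ → ℕ → ℂ, and for every j₀ ∈ ℕ there is C with |f(t) − ∑_{j<j₀} ∑_{i≤k_j} a_{j i} t^{α_j} (log t)^i| ≤ C t^{Re α_{j₀}} (1 + |log t|^{k_{j₀}}) for all 0 < t ≤ 1. Then the function η(s) := (1/Γ((s+1)/2)) ∫₀^∞ t^{(s-1)/2} f(t) dt is given by an absolutely convergent integral and is holomorphic for Re s > −2 Re α₀ − 1, and there exists a function η̃, meromorphic on ℂ, with η̃(s) = η(s) for Re s > −2 Re α₀ − 1, such that η̃ is holomorphic on ℂ \ {s_j : j ∈ ℕ} where s_j := −2α_j − 1, and for every j the function s ↦ η̃(s) − (1/Γ((s+1)/2)) ∑_{i=0}^{k_j} a_{j i} (−1)^i i! 2^{i+1} (s − s_j)^{−i−1} extends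 holomorphically to a neighborhood of s_j. -/
/-!
With `z = (s + 1) / 2` the integral is the Mellin transform of `f` at `z`. For each `N`, subtract
from `f` the first `N` groups of terms of its expansion, cut off to `(0, 1]`. The remainder is
`O(t ^ (re α_N - δ))` at `0` for every `δ > 0` and still decays exponentially at infinity, so its
Mellin transform is holomorphic on `re z > -re α_N`. The Mellin transform of a subtracted term is
explicit: `∫₀¹ t ^ (z + α - 1) (log t) ^ i dt = (-1) ^ i i! (z + α) ^ (-i - 1)`, obtained from the
case `i = 0` by differentiating in `z` (`hasMellin_logTerm`). Adding these rational functions back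
gives a meromorphic function `etaCont f α k a N` on `re z > -re α_N`. Successive ones agree on
their common half-plane (`etaCont_succ`), and since `re α_N → ∞` they glue to a continuation to all
of `ℂ` whose polar part at `-α_j` is exactly the rational function attached to `j`. Multiplying by
the entire function `1 / Γ` finishes the argument.
-/

open MeasureTheory Set Filter

open scoped Topology

/-- The function `t ^ α * (log t) ^ i`, cut off to `(0, 1]`. -/
noncomputable def logTerm (α : ℂ) (i : ℕ) : ℝ → ℂ :=
  (Ioc (0 : ℝ) 1).indicator fun t => (t : ℂ) ^ α * ((Real.log t : ℝ) : ℂ) ^ i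

/-- The `j`-th group of terms in the expansion, cut off to `(0, 1]`. -/
noncomputable def expGroup (α : ℕ → ℂ) (k : ℕ → ℕ) (a : ℕ → ℕ → ℂ) (j : ℕ) (t : ℝ) : ℂ :=
  ∑ i ∈ Finset.range (k j + 1), a j i * logTerm (α j) i t

/-- The Mellin transform of `expGroup α k a j`, as a rational function with its only pole
at `-α j`. -/
noncomputable def polarPart (α : ℕ → ℂ) (k : ℕ → ℕ) (a : ℕ → ℕ → ℂ) (j : ℕ) (z : ℂ) : ℂ :=
  ∑ i ∈ Finset.range (k j + 1),
    a j i * ((-1) ^ i * (Nat.factorial i : ℂ) * (z + α j) ^ (-(i : ℤ) - 1))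

/-- The remainder of `f` after removing the first `N` cut-off groups of its expansion. -/
noncomputable def expRem (f : ℝ → ℂ) (α : ℕ → ℂ) (k : ℕ → ℕ) (a : ℕ → ℕ → ℂ) (N : ℕ) (t : ℝ) : ℂ :=
  f t - ∑ j ∈ Finset.range N, expGroup α k a j t

/-- The continuation of the Mellin transform of `f` to `-re (α N) < re z`; outside that half-plane
the Mellin integral may diverge and the value has no meaning. -/
noncomputable def etaCont (f : ℝ → ℂ) (α : ℕ → ℂ) (k : ℕ → ℕ) (a : ℕ → ℕ → ℂ) (N : ℕ) (z : ℂ) : ℂ :=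
  mellin (expRem f α k a N) z + ∑ j ∈ Finset.range N, polarPart α k a j z

/-! ### Mellin transforms of the cut-off terms -/

lemma locallyIntegrableOn_indicator {g : ℝ → ℂ} {s A : Set ℝ} (hg : LocallyIntegrableOn g s)
    (hA : MeasurableSet A) : LocallyIntegrableOn (A.indicator g) s := by
  intro x hx
  obtain ⟨U, hU, hi⟩ := hg x hx
  exact ⟨U, hU, hi.indicator hA⟩

lemma locallyIntegrableOn_logTerm (α : ℂ) (i : ℕ) :
    LocallyIntegrableOn (logTerm α i) (Ioi 0) := by
  refine locallyIntegrableOn_indicator ?_ measurableSet_Ioc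
  refine ContinuousOn.locallyIntegrableOn ?_ measurableSet_Ioi
  refine continuousOn_of_forall_continuousAt fun t ht => ?_
  have ht' : t ≠ 0 := ne_of_gt ht
  refine (Complex.continuousAt_ofReal_cpow_const _ _ (Or.inr ht')).mul ?_
  exact (Complex.continuous_ofReal.continuousAt.comp (Real.continuousAt_log ht')).pow i

lemma logTerm_succ (α : ℂ) (i : ℕ) :
    logTerm α (i + 1) = fun t => Real.log t • logTerm α i t := by
  funext t
  unfold logTerm
  by_cases h : t ∈ Ioc (0 : ℝ) 1
  · simp only [indicator_of_mem h, Complex.real_smul]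
    ring
  · simp [indicator_of_notMem h]

lemma logTerm_eq_zero (α : ℂ) (i : ℕ) {t : ℝ} (ht : 1 < t) : logTerm α i t = 0 :=
  indicator_of_notMem (fun h => absurd h.2 (not_le.mpr ht)) _

lemma isBigO_logTerm_top (α : ℂ) (i : ℕ) (g : ℝ → ℝ) : logTerm α i =O[atTop] g := by
  refine (Asymptotics.isBigO_zero g atTop).congr' ?_ EventuallyEq.rfl
  filter_upwards [eventually_gt_atTop 1] with t ht
  exact (logTerm_eq_zero α i ht).symm

lemma isBigO_logTerm_zero (α : ℂ) (i : ℕ) :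
    ∀ b : ℝ, -α.re < b → logTerm α i =O[𝓝[>] 0] (· ^ (-b)) := by
  induction i with
  | zero =>
    intro b hb
    refine Asymptotics.IsBigO.of_bound 1 ?_
    filter_upwards [Ioc_mem_nhdsGT (zero_lt_one' ℝ)] with t ht
    simp only [logTerm, indicator_of_mem ht, pow_zero, mul_one, one_mul]
    rw [Complex.norm_cpow_eq_rpow_re_of_pos ht.1, Real.norm_of_nonneg (Real.rpow_nonneg ht.1.le _)]
    exact Real.rpow_le_rpow_of_exponent_ge ht.1 ht.2 (by linarith)
  | succ i ih =>
    intro b hb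
    obtain ⟨c, hc, hcb⟩ := exists_between hb
    rw [logTerm_succ]
    exact isBigO_rpow_zero_log_smul hcb (ih c hc)

/-- Induction on the power of `log`: multiplying by `log` differentiates the Mellin transform. -/
lemma hasMellin_logTerm (α : ℂ) (i : ℕ) :
    ∀ z : ℂ, -α.re < z.re →
      HasMellin (logTerm α i) z ((-1) ^ i * (Nat.factorial i : ℂ) * (z + α) ^ (-(i : ℤ) - 1)) := by
  induction i with
  | zero =>
    intro z hz
    have h := hasMellin_cpow_Ioc α (s := z) (by linarith)
    simpa [logTerm, zpow_neg_one] using h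
  | succ i ih =>
    intro z hz
    obtain ⟨b, hb, hbz⟩ := exists_between hz
    have h := mellin_hasDerivAt_of_isBigO_rpow (locallyIntegrableOn_logTerm α i)
      (isBigO_logTerm_top α i _) (lt_add_one z.re) (isBigO_logTerm_zero α i b hb) hbz
    rw [← logTerm_succ] at h
    refine ⟨h.1, h.2.unique ?_⟩
    have hne : z + α ≠ 0 := fun h0 => by
      have := congrArg Complex.re h0
      simp at this
      linarith
    have hd : HasDerivAt (fun w : ℂ => (-1) ^ i * (Nat.factorial i : ℂ) *
        (w + α) ^ (-(i : ℤ) - 1)) ((-1) ^ i * (Nat.factorial i : ℂ) *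
        ((((-(i : ℤ) - 1 : ℤ) : ℂ) * (z + α) ^ (-(i : ℤ) - 1 - 1)) * 1)) z := by
      refine HasDerivAt.const_mul _ ?_
      exact (hasDerivAt_zpow (-(i : ℤ) - 1) (z + α) (Or.inl hne)).comp z
        ((hasDerivAt_id z).add_const α)
    have he : mellin (logTerm α i) =ᶠ[𝓝 z] fun w : ℂ => (-1) ^ i * (Nat.factorial i : ℂ) *
        (w + α) ^ (-(i : ℤ) - 1) := by
      filter_upwards [(isOpen_lt continuous_const Complex.continuous_re).mem_nhds hz] with w hw
      exact (ih w hw).2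
    convert hd.congr_of_eventuallyEq he using 1
    rw [show (-((i + 1 : ℕ) : ℤ) - 1) = -(i : ℤ) - 1 - 1 by push_cast; ring, Nat.factorial_succ]
    push_cast
    ring

lemma hasMellin_expGroup (α : ℕ → ℂ) (k : ℕ → ℕ) (a : ℕ → ℕ → ℂ) (j : ℕ) {z : ℂ}
    (hz : -(α j).re < z.re) : HasMellin (expGroup α k a j) z (polarPart α k a j z) := by
  unfold polarPart
  have key : ∀ n : ℕ, HasMellin
      (fun t => ∑ i ∈ Finset.range n, a j i * logTerm (α j) i t) z
      (∑ i ∈ Finset.range n,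
        a j i * ((-1) ^ i * (Nat.factorial i : ℂ) * (z + α j) ^ (-(i : ℤ) - 1))) := by
    intro n
    induction n with
    | zero => simp [HasMellin, MellinConvergent, mellin]
    | succ n ih =>
      simp only [Finset.sum_range_succ]
      have h1 := hasMellin_logTerm (α j) n z hz
      have h2 := hasMellin_const_smul h1.1 (a j n)
      have h3 := hasMellin_add ih.1 h2.1
      simp only [smul_eq_mul] at h2 h3
      rw [ih.2, h2.2, h1.2] at h3
      exact h3
  exact key _

/-! ### The remainders -/

lemma expRem_succ (f : ℝ → ℂ) (α : ℕ → ℂ) (k : ℕ → ℕ) (a : ℕ → ℕ → ℂ) (N : ℕ) :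
    expRem f α k a (N + 1) = fun t => expRem f α k a N t - expGroup α k a N t := by
  funext t
  simp only [expRem, Finset.sum_range_succ]
  ring

lemma locallyIntegrableOn_expRem {f : ℝ → ℂ} (hf : ContinuousOn f (Ioi 0))
    (α : ℕ → ℂ) (k : ℕ → ℕ) (a : ℕ → ℕ → ℂ) (N : ℕ) :
    LocallyIntegrableOn (expRem f α k a N) (Ioi 0) := by
  induction N with
  | zero =>
    have h : LocallyIntegrableOn f (Ioi 0) := hf.locallyIntegrableOn measurableSet_Ioi
    have h0 : expRem f α k a 0 = f := by
      funext t
      simp [expRem]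
    rwa [h0]
  | succ N ih =>
    rw [expRem_succ]
    refine ih.sub ?_
    unfold expGroup
    intro x hx
    choose U hU hi using fun i => locallyIntegrableOn_logTerm (α N) i x hx
    refine ⟨⋂ i ∈ Finset.range (k N + 1), U i, (Filter.biInter_finset_mem _).mpr fun i _ => hU i,
      integrable_finsetSum _ fun i hi' => ?_⟩
    exact ((hi i).mono_set (biInter_subset_of_mem hi')).const_mul _

lemma expRem_eq_self (f : ℝ → ℂ) (α : ℕ → ℂ) (k : ℕ → ℕ) (a : ℕ → ℕ → ℂ) (N : ℕ) {t : ℝ}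
    (ht : 1 < t) : expRem f α k a N t = f t := by
  simp [expRem, expGroup, logTerm_eq_zero _ _ ht]

lemma isBigO_expRem_top {f : ℝ → ℂ} {C₀ ε : ℝ}
    (hdecay : ∀ t : ℝ, 1 ≤ t → ‖f t‖ ≤ C₀ * Real.exp (-ε * t))
    (α : ℕ → ℂ) (k : ℕ → ℕ) (a : ℕ → ℕ → ℂ) (N : ℕ) :
    expRem f α k a N =O[atTop] fun t => Real.exp (-ε * t) := by
  refine Asymptotics.IsBigO.of_bound C₀ ?_
  filter_upwards [eventually_gt_atTop 1] with t ht
  rw [expRem_eq_self f α k a N ht, Real.norm_of_nonneg (Real.exp_pos _).le]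
  exact hdecay t ht.le

lemma expRem_eq_of_mem (f : ℝ → ℂ) (α : ℕ → ℂ) (k : ℕ → ℕ) (a : ℕ → ℕ → ℂ) (N : ℕ) {t : ℝ}
    (ht : t ∈ Ioc (0 : ℝ) 1) : expRem f α k a N t =
      f t - ∑ j ∈ Finset.range N, ∑ i ∈ Finset.range (k j + 1),
          a j i * (t : ℂ) ^ (α j) * (Complex.ofReal (Real.log t)) ^ i := by
  simp only [expRem, expGroup, logTerm, indicator_of_mem ht, mul_assoc]

/-- The powers of `log` in the error term cost an arbitrarily small power of `t`. -/
lemma isBigO_expRem_zero {f : ℝ → ℂ} {α : ℕ → ℂ} {k : ℕ → ℕ} {a : ℕ → ℕ → ℂ} {N : ℕ}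
    (hexp : ∃ C : ℝ, ∀ t : ℝ, 0 < t → t ≤ 1 →
      ‖f t - ∑ j ∈ Finset.range N, ∑ i ∈ Finset.range (k j + 1),
          a j i * (t : ℂ) ^ (α j) * (Complex.ofReal (Real.log t)) ^ i‖
        ≤ C * t ^ (α N).re * (1 + |Real.log t| ^ (k N)))
    {b : ℝ} (hb : -(α N).re < b) : expRem f α k a N =O[𝓝[>] 0] (· ^ (-b)) := by
  obtain ⟨C, hC⟩ := hexp
  have h1 : expRem f α k a N =O[𝓝[>] 0]
      fun t : ℝ => t ^ (α N).re * (1 + |Real.log t| ^ (k N)) := by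
    refine Asymptotics.IsBigO.of_bound C ?_
    filter_upwards [Ioc_mem_nhdsGT (zero_lt_one' ℝ)] with t ht
    rw [expRem_eq_of_mem f α k a N ht, Real.norm_of_nonneg
      (mul_nonneg (Real.rpow_nonneg ht.1.le _) (by positivity)), ← mul_assoc]
    exact hC t ht.1 ht.2
  have hd : -(b + (α N).re) < 0 := by linarith
  have h2 : (fun t : ℝ => 1 + |Real.log t| ^ (k N)) =O[𝓝[>] 0]
      fun t : ℝ => t ^ (-(b + (α N).re)) := by
    refine Asymptotics.IsBigO.add ?_ ?_
    · simpa using (isLittleO_abs_log_rpow_rpow_nhdsGT_zero 0 hd).isBigO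
    · simpa using (isLittleO_abs_log_rpow_rpow_nhdsGT_zero (k N : ℝ) hd).isBigO
  refine h1.trans (((Asymptotics.isBigO_refl (fun t : ℝ => t ^ (α N).re) _).mul h2).congr'
    EventuallyEq.rfl ?_)
  filter_upwards [self_mem_nhdsWithin] with t ht
  rw [← Real.rpow_add ht]
  congr 1
  ring

lemma etaCont_succ {f : ℝ → ℂ} {α : ℕ → ℂ} {k : ℕ → ℕ} {a : ℕ → ℕ → ℂ} {N : ℕ} {z : ℂ}
    (hz : -(α N).re < z.re) (hconv : MellinConvergent (expRem f α k a N) z) :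
    etaCont f α k a (N + 1) z = etaCont f α k a N z := by
  have h1 := hasMellin_expGroup α k a N hz
  have h2 := (hasMellin_sub hconv h1.1).2
  rw [← expRem_succ, h1.2] at h2
  simp only [etaCont, h2, Finset.sum_range_succ]
  ring

lemma analyticAt_polarPart (α : ℕ → ℂ) (k : ℕ → ℕ) (a : ℕ → ℕ → ℂ) (j : ℕ) {z : ℂ}
    (hz : z + α j ≠ 0) : AnalyticAt ℂ (polarPart α k a j) z := by
  unfold polarPart
  refine Finset.analyticAt_fun_sum _ fun i _ => ?_
  exact analyticAt_const.mul (analyticAt_const.mul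
    ((analyticAt_id.add analyticAt_const).zpow hz))

/-- The polar part in the variable `s`, where `z + α j = (s - s_j) / 2`. -/
lemma polarPart_eq (α : ℕ → ℂ) (k : ℕ → ℕ) (a : ℕ → ℕ → ℂ) (j : ℕ) (s : ℂ) :
    polarPart α k a j ((s + 1) / 2) = ∑ i ∈ Finset.range (k j + 1),
      a j i * (-1) ^ i * (Nat.factorial i : ℂ) * 2 ^ (i + 1) *
        (s - (-2 * α j - 1)) ^ (-(i : ℤ) - 1) := by
  refine Finset.sum_congr rfl fun i _ => ?_
  rw [show (s + 1) / 2 + α j = (s - (-2 * α j - 1)) / 2 by ring, div_zpow,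
    show (-(i : ℤ) - 1) = -((i + 1 : ℕ) : ℤ) by push_cast; ring, zpow_neg (2 : ℂ), zpow_natCast,
    div_inv_eq_mul]
  ring

/-! ### The continuation -/

/-- (Lemma on meromorphic continuation of η-functions.)
If `f : (0,∞) → ℂ` is continuous, exponentially decaying at `∞`, and admits
expansion data `(α, k, a)` — i.e. a short-time asymptotic expansion
`f(t) ∼ ∑_{j,i} a j i · t^(α j) · (log t)^i` with `Re (α j)` nondecreasing and
tending to `∞` — then `η(s) = (1/Γ((s+1)/2)) ∫₀^∞ t^((s-1)/2) f(t) dt` is given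
by an absolutely convergent integral and is holomorphic for
`Re s > -2 Re α₀ - 1`, and extends to a meromorphic function on `ℂ`,
holomorphic off the points `s_j = -2 α j - 1`, whose principal part at `s_j` is
`(1/Γ((s+1)/2)) · ∑_{i ≤ k j} a j i · (-1)^i i! 2^(i+1) (s - s_j)^(-i-1)`. -/
theorem statement2 (f : ℝ → ℂ) (hf : ContinuousOn f (Ioi 0))
    (C₀ ε : ℝ) (hC₀ : 0 < C₀) (hε : 0 < ε)
    (hdecay : ∀ t : ℝ, 1 ≤ t → ‖f t‖ ≤ C₀ * Real.exp (-ε * t))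
    (α : ℕ → ℂ) (k : ℕ → ℕ) (a : ℕ → ℕ → ℂ)
    (hinj : Function.Injective α)
    (hmono : Monotone fun j => (α j).re)
    (htend : Tendsto (fun j => (α j).re) atTop atTop)
    (hexp : ∀ j₀ : ℕ, ∃ C : ℝ, ∀ t : ℝ, 0 < t → t ≤ 1 →
      ‖f t - ∑ j ∈ Finset.range j₀, ∑ i ∈ Finset.range (k j + 1),
          a j i * (t : ℂ) ^ (α j) * (Complex.ofReal (Real.log t)) ^ i‖
        ≤ C * t ^ (α j₀).re * (1 + |Real.log t| ^ (k j₀))) :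
    (∀ s : ℂ, -2 * (α 0).re - 1 < s.re →
      IntegrableOn (fun t : ℝ => (t : ℂ) ^ ((s - 1) / 2) * f t) (Ioi 0)) ∧
    DifferentiableOn ℂ
      (fun s : ℂ => (1 / Complex.Gamma ((s + 1) / 2)) *
        ∫ t in Ioi (0 : ℝ), (t : ℂ) ^ ((s - 1) / 2) * f t)
      {s : ℂ | -2 * (α 0).re - 1 < s.re} ∧
    ∃ ηt : ℂ → ℂ,
      MeromorphicOn ηt Set.univ ∧
      (∀ s : ℂ, -2 * (α 0).re - 1 < s.re →
        ηt s = (1 / Complex.Gamma ((s + 1) / 2)) *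
          ∫ t in Ioi (0 : ℝ), (t : ℂ) ^ ((s - 1) / 2) * f t) ∧
      DifferentiableOn ℂ ηt {s : ℂ | ∀ j : ℕ, s ≠ -2 * α j - 1} ∧
      ∀ j : ℕ, ∃ g : ℂ → ℂ, AnalyticAt ℂ g (-2 * α j - 1) ∧
        ∀ᶠ s in nhdsWithin (-2 * α j - 1) {(-2 * α j - 1)}ᶜ,
          g s = ηt s - (1 / Complex.Gamma ((s + 1) / 2)) *
            ∑ i ∈ Finset.range (k j + 1),
              a j i * (-1) ^ i * (Nat.factorial i : ℂ) * 2 ^ (i + 1) *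
                (s - (-2 * α j - 1)) ^ (-(i : ℤ) - 1) := by
  have hconv : ∀ N : ℕ, ∀ z : ℂ, -(α N).re < z.re → MellinConvergent (expRem f α k a N) z := by
    intro N z hz
    obtain ⟨b, hb, hbz⟩ := exists_between hz
    exact mellinConvergent_of_isBigO_rpow_exp hε (locallyIntegrableOn_expRem hf α k a N)
      (isBigO_expRem_top hdecay α k a N) (isBigO_expRem_zero (hexp N) hb) hbz
  have hopen : ∀ N : ℕ, IsOpen {z : ℂ | -(α N).re < z.re} := fun N =>
    isOpen_lt continuous_const Complex.continuous_re
  have hanal : ∀ N : ℕ, ∀ z : ℂ, -(α N).re < z.re →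
      AnalyticAt ℂ (mellin (expRem f α k a N)) z := by
    intro N z hz
    have hd : DifferentiableOn ℂ (mellin (expRem f α k a N)) {z : ℂ | -(α N).re < z.re} := by
      intro w hw
      obtain ⟨b, hb, hbw⟩ := exists_between (show -(α N).re < w.re from hw)
      exact (mellin_differentiableAt_of_isBigO_rpow_exp hε (locallyIntegrableOn_expRem hf α k a N)
        (isBigO_expRem_top hdecay α k a N) (isBigO_expRem_zero (hexp N) hb)
        hbw).differentiableWithinAt
    exact hd.analyticAt ((hopen N).mem_nhds hz)
  have hle : ∀ N M : ℕ, N ≤ M → ∀ z : ℂ, -(α N).re < z.re →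
      etaCont f α k a M z = etaCont f α k a N z := by
    intro N M hNM z hz
    induction M, hNM using Nat.le_induction with
    | base => rfl
    | succ M hM ih =>
      have hzM : -(α M).re < z.re := by
        have : (α N).re ≤ (α M).re := hmono hM
        linarith
      rw [etaCont_succ hzM (hconv M z hzM), ih]
  have hex : ∀ z : ℂ, ∀ j : ℕ, ∃ N : ℕ, j < N ∧ -(α N).re < z.re := by
    intro z j
    obtain ⟨N, h1, h2⟩ := ((eventually_gt_atTop j).and (htend.eventually_gt_atTop (-z.re))).exists
    exact ⟨N, h1, by linarith⟩
  choose n _ hn using fun z => hex z 0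
  let H : ℂ → ℂ := fun z => etaCont f α k a (n z) z
  have hH : ∀ N : ℕ, ∀ z : ℂ, -(α N).re < z.re → H z = etaCont f α k a N z := by
    intro N z hz
    rcases le_total N (n z) with h | h
    · exact hle _ _ h z hz
    · exact (hle _ _ h z (hn z)).symm
  have hrem0 : expRem f α k a 0 = f := by
    funext t
    simp [expRem]
  have hm : ∀ s : ℂ, (∫ t in Ioi (0 : ℝ), (t : ℂ) ^ ((s - 1) / 2) * f t) =
      mellin f ((s + 1) / 2) := by
    intro s
    simp only [mellin, smul_eq_mul]
    rw [show (s + 1) / 2 - 1 = (s - 1) / 2 by ring]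
  have hre : ∀ s : ℂ, ((s + 1) / 2).re = (s.re + 1) / 2 := by
    intro s
    simp
  have hz0 : ∀ s : ℂ, -2 * (α 0).re - 1 < s.re → -(α 0).re < ((s + 1) / 2).re := by
    intro s hs
    rw [hre]
    linarith
  have hlin : ∀ s : ℂ, AnalyticAt ℂ (fun s : ℂ => (s + 1) / 2) s := fun s => by fun_prop
  have hGam : ∀ s : ℂ, AnalyticAt ℂ (fun s : ℂ => 1 / Complex.Gamma ((s + 1) / 2)) s := by
    intro s
    simp only [one_div]
    exact (Complex.differentiable_one_div_Gamma.analyticAt ((s + 1) / 2)).comp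
      (f := fun s : ℂ => (s + 1) / 2) (hlin s)
  -- Near any point the continuation is given by one of the explicit formulas.
  have hloc : ∀ N : ℕ, ∀ s : ℂ, -(α N).re < ((s + 1) / 2).re →
      ∀ᶠ w in 𝓝 s, H ((w + 1) / 2) = etaCont f α k a N ((w + 1) / 2) := by
    intro N s hs
    filter_upwards [(hlin s).continuousAt.preimage_mem_nhds ((hopen N).mem_nhds hs)] with w hw
    exact hH N _ hw
  have hne : ∀ (s : ℂ) (j : ℕ), s ≠ -2 * α j - 1 → (s + 1) / 2 + α j ≠ 0 := by
    intro s j hs h0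
    apply hs
    linear_combination 2 * h0
  refine ⟨?_, ?_, fun s => 1 / Complex.Gamma ((s + 1) / 2) * H ((s + 1) / 2), ?_, ?_, ?_, ?_⟩
  · intro s hs
    have h := hconv 0 _ (hz0 s hs)
    rw [hrem0, MellinConvergent, show (s + 1) / 2 - 1 = (s - 1) / 2 by ring] at h
    exact h
  · intro s hs
    simp only [hm]
    have h := hanal 0 _ (hz0 s hs)
    rw [hrem0] at h
    exact ((hGam s).mul (h.comp (f := fun s : ℂ => (s + 1) / 2)
      (hlin s))).differentiableAt.differentiableWithinAt
  · intro s _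
    obtain ⟨N, -, hN⟩ := hex ((s + 1) / 2) 0
    refine MeromorphicAt.congr (f := fun s => 1 / Complex.Gamma ((s + 1) / 2) *
      (mellin (expRem f α k a N) ((s + 1) / 2) +
        ∑ j ∈ Finset.range N, polarPart α k a j ((s + 1) / 2))) ?_ ?_
    · refine (hGam s).meromorphicAt.mul (MeromorphicAt.add
        ((hanal N _ hN).comp (f := fun s : ℂ => (s + 1) / 2) (hlin s)).meromorphicAt
        (MeromorphicAt.fun_sum fun j _ => ?_))
      simp only [polarPart]
      refine MeromorphicAt.fun_sum fun i _ => ?_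
      exact analyticAt_const.meromorphicAt.mul (analyticAt_const.meromorphicAt.mul
        (((hlin s).add analyticAt_const).meromorphicAt.zpow _))
    · filter_upwards [(hloc N s hN).filter_mono nhdsWithin_le_nhds] with w hw
      rw [hw, etaCont]
  · intro s hs
    beta_reduce
    rw [hm, hH 0 _ (hz0 s hs), etaCont, hrem0]
    simp
  · intro s hs
    obtain ⟨N, -, hN⟩ := hex ((s + 1) / 2) 0
    refine DifferentiableAt.differentiableWithinAt ?_
    refine ((hGam s).mul ?_).differentiableAt
    refine AnalyticAt.congr (f := fun s => mellin (expRem f α k a N) ((s + 1) / 2) +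
        ∑ j ∈ Finset.range N, polarPart α k a j ((s + 1) / 2)) ?_ ?_
    · refine ((hanal N _ hN).comp (f := fun s : ℂ => (s + 1) / 2) (hlin s)).add
        (Finset.analyticAt_fun_sum _ fun j _ => ?_)
      exact (analyticAt_polarPart α k a j (hne s j (hs j))).comp
        (f := fun s : ℂ => (s + 1) / 2) (hlin s)
    · filter_upwards [hloc N s hN] with w hw
      rw [hw, etaCont]
  · intro j
    obtain ⟨N, hjN, hN⟩ := hex ((-2 * α j - 1 + 1) / 2) j
    -- Drop the `j`-th polar part; by injectivity of `α` the others are regular at `s_j`.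
    refine ⟨fun s => 1 / Complex.Gamma ((s + 1) / 2) *
      (mellin (expRem f α k a N) ((s + 1) / 2) +
        ∑ l ∈ (Finset.range N).erase j, polarPart α k a l ((s + 1) / 2)), ?_, ?_⟩
    · refine (hGam _).mul (((hanal N _ hN).comp (f := fun s : ℂ => (s + 1) / 2) (hlin _)).add
        (Finset.analyticAt_fun_sum _ fun l hl => ?_))
      refine (analyticAt_polarPart α k a l (hne _ l fun h => ?_)).comp
        (f := fun s : ℂ => (s + 1) / 2) (hlin _)
      refine (Finset.mem_erase.mp hl).1 (hinj ?_)
      linear_combination (1 / 2) * h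
    · filter_upwards [(hloc N _ hN).filter_mono nhdsWithin_le_nhds] with w hw
      rw [hw, etaCont, ← polarPart_eq,
        ← Finset.add_sum_erase _ (fun l => polarPart α k a l ((w + 1) / 2))
          (Finset.mem_range.mpr hjN)]
      ring
end

section
/- Let f : (0,∞) → ℂ be continuous with |f(t)| ≤ C e^{-εt} for t ≥ 1 (some C, ε > 0), let (α, k, a) be expansion data for f, set s_j := −2α_j − 1, and let η̃ be the meromorphic continuation to ℂ of η(s) := (1/Γ((s+1)/2)) ∫₀^∞ t^{(s-1)/2} f(t) dt. Fix j with α_j ∉ {0, 1, 2, ...}. Then the function s ↦ (s − s_j)^{k_j + 1} η̃(s) extends holomorphically to a neighborhood of s_j, with value at s_j equal to (−1)^{k_j} k_j! 2^{k_j+1} a_{j, k_j} / Γ(−α_j). In particular η̃ has a pole of order at most k_j + 1 at s_j, and the top Laurent coefficient Res_{k_j+1} η̃(s_j) equals (−1)^{k_j} k_j! 2^{k_j+1} a_{j,k_j} / Γ(−α_j). -/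
open MeasureTheory Set Filter

/-!
The Mellin transform `∫₀^∞ t^(z-1) f(t) dt` at `z = (s + 1) / 2` is continued past its abscissa of
convergence by subtracting from `f` the first `J` groups of its expansion, cut off to `(0, 1]`.

* The cut-off monomial `1_{(0,1]} t^β (log t)^i` has Mellin transform `(-1)^i i! / (z + β)^(i+1)` on
  `Re z > -Re β`. For `i = 0` this is an elementary integral, and each further logarithm
  differentiates in `z` (`hasMellin_cutTerm`).
* The remainder is `O(t^(-b))` at `0` for all `b > -Re α_J`, so its Mellin transform is
  holomorphic on `Re z > -Re α_J` (`differentiableAt_mellin_remainder`).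

The sum of the two pieces, divided by `Γ(z)`, is meromorphic on `Re s > -2 Re α_J - 1`. It agrees
with `ηt` on the half-plane of convergence, hence near every point of the larger half-plane by the
identity theorem (`eventuallyEq_of_meromorphicOn`). Choosing `J` with `Re α_J > Re α_j` brings `s_j`
into that half-plane; there `z + α_j = (s - s_j) / 2`, the groups with `l ≠ j` are regular at `s_j`
by injectivity of `α`, and multiplying by `(s - s_j)^(k_j+1)` leaves an analytic function whose
value at `s_j` comes from the term `i = k_j` alone. As `1 / Γ` is entire, no further poles appear.
-/

/-! ### Mellin transforms of cut-off monomials -/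

/-- The monomial `t ^ β * (log t) ^ i` cut off to `(0, 1]`, so that only its behaviour at `0`
contributes to the Mellin transform. -/
noncomputable def cutTerm (β : ℂ) (i : ℕ) : ℝ → ℂ :=
  indicator (Ioc 0 1) fun t => (t : ℂ) ^ β * (Complex.ofReal (Real.log t)) ^ i

lemma cutTerm_succ (β : ℂ) (i : ℕ) :
    cutTerm β (i + 1) = fun t => Real.log t • cutTerm β i t := by
  ext t
  by_cases ht : t ∈ Ioc (0 : ℝ) 1
  · simp only [cutTerm, indicator_of_mem ht, Complex.real_smul]
    ring
  · simp [cutTerm, indicator_of_notMem ht]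

lemma locallyIntegrableOn_cutTerm (β : ℂ) (i : ℕ) :
    LocallyIntegrableOn (cutTerm β i) (Ioi 0) := by
  have hc : ContinuousOn (fun t : ℝ => (t : ℂ) ^ β * (Complex.ofReal (Real.log t)) ^ i)
      (Ioi 0) := by
    intro t ht
    have ht0 : (0 : ℝ) < t := ht
    refine ContinuousAt.continuousWithinAt (ContinuousAt.mul ?_ (ContinuousAt.pow ?_ _))
    · exact Complex.continuousAt_ofReal_cpow_const _ _ (Or.inr ht0.ne')
    · exact Complex.continuous_ofReal.continuousAt.comp (Real.continuousAt_log ht0.ne')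
  exact fun t ht => (hc.locallyIntegrableOn measurableSet_Ioi t ht).imp fun u hu =>
    ⟨hu.1, hu.2.indicator measurableSet_Ioc⟩

lemma isBigO_cutTerm_zero (β : ℂ) (i : ℕ) :
    ∀ b : ℝ, -β.re < b → cutTerm β i =O[nhdsWithin 0 (Ioi 0)] fun t : ℝ => t ^ (-b) := by
  induction i with
  | zero =>
    intro b hb
    refine Asymptotics.IsBigO.of_bound 1 ?_
    filter_upwards [Ioc_mem_nhdsGT (zero_lt_one' ℝ)] with t ht
    simp only [cutTerm, indicator_of_mem ht, pow_zero, mul_one, one_mul]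
    rw [Complex.norm_cpow_eq_rpow_re_of_pos ht.1, Real.norm_of_nonneg (Real.rpow_nonneg ht.1.le _)]
    exact Real.rpow_le_rpow_of_exponent_ge ht.1 ht.2 (by linarith)
  | succ i ih =>
    intro b hb
    obtain ⟨c, hc1, hc2⟩ := exists_between hb
    rw [cutTerm_succ]
    exact isBigO_rpow_zero_log_smul hc2 (ih c hc1)

lemma isBigO_cutTerm_top (β : ℂ) (i : ℕ) (b : ℝ) :
    cutTerm β i =O[atTop] fun t : ℝ => t ^ (-b) := by
  refine Asymptotics.IsBigO.of_bound 1 ?_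
  filter_upwards [eventually_gt_atTop (1 : ℝ)] with t ht
  rw [cutTerm, indicator_of_notMem (fun h => absurd h.2 (not_le.2 ht))]
  simp

/-- The case `i + 1` is the derivative in `z` of the case `i`. -/
lemma hasMellin_cutTerm (β : ℂ) (i : ℕ) :
    ∀ z : ℂ, -β.re < z.re →
      HasMellin (cutTerm β i) z ((-1) ^ i * (Nat.factorial i : ℂ) / (z + β) ^ (i + 1)) := by
  induction i with
  | zero =>
    intro z hz
    have h := hasMellin_cpow_Ioc β (s := z) (by linarith)
    simpa [cutTerm] using h
  | succ i ih =>
    intro z hz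
    obtain ⟨b, hb1, hb2⟩ := exists_between hz
    obtain ⟨h1, h2⟩ := mellin_hasDerivAt_of_isBigO_rpow (locallyIntegrableOn_cutTerm β i)
      (isBigO_cutTerm_top β i (z.re + 1)) (lt_add_one _) (isBigO_cutTerm_zero β i b hb1) hb2
    rw [← cutTerm_succ] at h1 h2
    refine ⟨h1, ?_⟩
    have hne : z + β ≠ 0 := fun h => by
      have := congrArg Complex.re h
      simp at this
      linarith
    have hev : mellin (cutTerm β i) =ᶠ[nhds z]
        fun w => (-1) ^ i * (Nat.factorial i : ℂ) / (w + β) ^ (i + 1) := by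
      filter_upwards [(isOpen_lt continuous_const Complex.continuous_re).mem_nhds hz] with w hw
      exact (ih w hw).2
    have hd : HasDerivAt (fun w : ℂ => (w + β) ^ (i + 1)) (((i + 1 : ℕ) : ℂ) * (z + β) ^ i) z := by
      simpa using ((hasDerivAt_id z).add_const β).fun_pow (i + 1)
    have hd2 := (hasDerivAt_const z ((-1) ^ i * (Nat.factorial i : ℂ))).fun_div hd
      (pow_ne_zero _ hne)
    rw [h2.unique (hd2.congr_of_eventuallyEq hev)]
    rw [Nat.factorial_succ]
    push_cast
    field_simp
    ring

/-! ### The cut-off partial expansion -/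

/-- The part of the expansion with exponents `α 0, …, α (J - 1)`, cut off to `(0, 1]`. -/
noncomputable def cutSum (α : ℕ → ℂ) (k : ℕ → ℕ) (a : ℕ → ℕ → ℂ) (J : ℕ) (t : ℝ) : ℂ :=
  ∑ j ∈ Finset.range J, ∑ i ∈ Finset.range (k j + 1), a j i * cutTerm (α j) i t

lemma hasMellin_finset_sum {ι : Type*} (S : Finset ι) (g : ι → ℝ → ℂ) (m : ι → ℂ) (z : ℂ)
    (h : ∀ i ∈ S, HasMellin (g i) z (m i)) :
    HasMellin (fun t => ∑ i ∈ S, g i t) z (∑ i ∈ S, m i) := by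
  classical
  induction S using Finset.induction_on with
  | empty => simp [HasMellin, MellinConvergent, mellin]
  | insert i S hi ih =>
    have h1 := h i (Finset.mem_insert_self i S)
    have h2 := ih fun l hl => h l (Finset.mem_insert_of_mem hl)
    simp only [Finset.sum_insert hi]
    rw [← h1.2, ← h2.2]
    exact hasMellin_add h1.1 h2.1

lemma hasMellin_cutSum (α : ℕ → ℂ) (k : ℕ → ℕ) (a : ℕ → ℕ → ℂ) (J : ℕ) (z : ℂ)
    (hz : ∀ j < J, -(α j).re < z.re) :
    HasMellin (cutSum α k a J) z (∑ j ∈ Finset.range J, ∑ i ∈ Finset.range (k j + 1),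
      a j i * ((-1) ^ i * (Nat.factorial i : ℂ) / (z + α j) ^ (i + 1))) := by
  refine hasMellin_finset_sum _ _ _ z fun j hj => hasMellin_finset_sum _ _ _ z fun i _ => ?_
  have h := hasMellin_cutTerm (α j) i z (hz j (Finset.mem_range.1 hj))
  have h' := hasMellin_const_smul h.1 (a j i)
  rw [h.2] at h'
  exact h'

lemma locallyIntegrableOn_finset_sum {ι : Type*} (S : Finset ι) (g : ι → ℝ → ℂ)
    (h : ∀ i ∈ S, LocallyIntegrableOn (g i) (Ioi 0)) :
    LocallyIntegrableOn (fun t => ∑ i ∈ S, g i t) (Ioi 0) := by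
  classical
  induction S using Finset.induction_on with
  | empty => simpa using locallyIntegrableOn_zero
  | insert i S hi ih =>
    simp only [Finset.sum_insert hi]
    exact (h i (Finset.mem_insert_self i S)).add (ih fun l hl => h l (Finset.mem_insert_of_mem hl))

lemma locallyIntegrableOn_cutSum (α : ℕ → ℂ) (k : ℕ → ℕ) (a : ℕ → ℕ → ℂ) (J : ℕ) :
    LocallyIntegrableOn (cutSum α k a J) (Ioi 0) :=
  locallyIntegrableOn_finset_sum _ _ fun j _ => locallyIntegrableOn_finset_sum _ _ fun i _ =>
    (locallyIntegrableOn_cutTerm (α j) i).smul (a j i)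

/-! ### The remainder of the expansion -/

/-- The bound `C t ^ A (1 + |log t| ^ n)` near `0` loses only an arbitrarily small power. -/
lemma isBigO_of_log_bound (r : ℝ → ℂ) (C A b : ℝ) (n : ℕ) (hb : -A < b)
    (h : ∀ t : ℝ, 0 < t → t ≤ 1 → ‖r t‖ ≤ C * t ^ A * (1 + |Real.log t| ^ n)) :
    r =O[nhdsWithin 0 (Ioi 0)] fun t : ℝ => t ^ (-b) := by
  have h1 : r =O[nhdsWithin 0 (Ioi 0)]
      fun t : ℝ => t ^ A * (1 + |Real.log t| ^ n) := by
    refine Asymptotics.IsBigO.of_bound C ?_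
    filter_upwards [Ioc_mem_nhdsGT (zero_lt_one' ℝ)] with t ht
    have := Real.rpow_nonneg ht.1.le A
    rw [Real.norm_of_nonneg (by positivity), ← mul_assoc]
    exact h t ht.1 ht.2
  have hs : -b - A < 0 := by linarith
  have hlog : (fun t : ℝ => 1 + |Real.log t| ^ n) =O[nhdsWithin 0 (Ioi 0)]
      fun t : ℝ => t ^ (-b - A) := by
    refine Asymptotics.IsBigO.add ?_ ?_
    · refine Asymptotics.IsBigO.of_bound 1 ?_
      filter_upwards [Ioc_mem_nhdsGT (zero_lt_one' ℝ)] with t ht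
      rw [norm_one, one_mul, Real.norm_of_nonneg (Real.rpow_nonneg ht.1.le _)]
      exact Real.one_le_rpow_of_pos_of_le_one_of_nonpos ht.1 ht.2 hs.le
    · simpa using (isLittleO_abs_log_rpow_rpow_nhdsGT_zero (n : ℝ) hs).isBigO
  refine (h1.trans ((Asymptotics.isBigO_refl (fun t : ℝ => t ^ A) _).mul hlog)).trans_eventuallyEq ?_
  filter_upwards [self_mem_nhdsWithin] with t ht
  rw [← Real.rpow_add ht]
  congr 1
  ring

section Remainder

variable {f : ℝ → ℂ} {C₀ ε : ℝ} {α : ℕ → ℂ} {k : ℕ → ℕ} {a : ℕ → ℕ → ℂ}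

lemma locallyIntegrableOn_remainder (hf : ContinuousOn f (Ioi 0)) (J : ℕ) :
    LocallyIntegrableOn (fun t => f t - cutSum α k a J t) (Ioi 0) :=
  (hf.locallyIntegrableOn measurableSet_Ioi).sub (locallyIntegrableOn_cutSum α k a J)

lemma isBigO_remainder_top (hε : 0 < ε)
    (hdecay : ∀ t : ℝ, 1 ≤ t → ‖f t‖ ≤ C₀ * Real.exp (-ε * t)) (J : ℕ) (b : ℝ) :
    (fun t => f t - cutSum α k a J t) =O[atTop] fun t : ℝ => t ^ (-b) := by
  refine Asymptotics.IsBigO.sub ?_ ?_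
  · refine Asymptotics.IsBigO.trans ?_ (isLittleO_exp_neg_mul_rpow_atTop hε (-b)).isBigO
    refine Asymptotics.IsBigO.of_bound C₀ ?_
    filter_upwards [eventually_ge_atTop (1 : ℝ)] with t ht
    rw [Real.norm_of_nonneg (Real.exp_pos _).le]
    exact hdecay t ht
  · exact Asymptotics.IsBigO.fun_sum fun j _ => Asymptotics.IsBigO.fun_sum fun i _ =>
      (isBigO_cutTerm_top (α j) i b).const_mul_left _

lemma isBigO_remainder_zero (J : ℕ)
    (hexp : ∃ C : ℝ, ∀ t : ℝ, 0 < t → t ≤ 1 →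
      ‖f t - ∑ j ∈ Finset.range J, ∑ i ∈ Finset.range (k j + 1),
          a j i * (t : ℂ) ^ (α j) * (Complex.ofReal (Real.log t)) ^ i‖
        ≤ C * t ^ (α J).re * (1 + |Real.log t| ^ (k J)))
    (b : ℝ) (hb : -(α J).re < b) :
    (fun t => f t - cutSum α k a J t) =O[nhdsWithin 0 (Ioi 0)] fun t : ℝ => t ^ (-b) := by
  obtain ⟨C, hC⟩ := hexp
  refine isBigO_of_log_bound _ C (α J).re b (k J) hb fun t ht0 ht1 => ?_
  have : cutSum α k a J t = ∑ j ∈ Finset.range J, ∑ i ∈ Finset.range (k j + 1),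
      a j i * (t : ℂ) ^ (α j) * (Complex.ofReal (Real.log t)) ^ i := by
    simp only [cutSum, cutTerm, indicator_of_mem (show t ∈ Ioc (0 : ℝ) 1 from ⟨ht0, ht1⟩),
      mul_assoc]
  rw [this]
  exact hC t ht0 ht1

lemma mellinConvergent_remainder (hf : ContinuousOn f (Ioi 0)) (hε : 0 < ε)
    (hdecay : ∀ t : ℝ, 1 ≤ t → ‖f t‖ ≤ C₀ * Real.exp (-ε * t)) (J : ℕ)
    (hexp : ∃ C : ℝ, ∀ t : ℝ, 0 < t → t ≤ 1 →
      ‖f t - ∑ j ∈ Finset.range J, ∑ i ∈ Finset.range (k j + 1),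
          a j i * (t : ℂ) ^ (α j) * (Complex.ofReal (Real.log t)) ^ i‖
        ≤ C * t ^ (α J).re * (1 + |Real.log t| ^ (k J)))
    (z : ℂ) (hz : -(α J).re < z.re) :
    MellinConvergent (fun t => f t - cutSum α k a J t) z := by
  obtain ⟨b, hb1, hb2⟩ := exists_between hz
  exact mellinConvergent_of_isBigO_rpow (locallyIntegrableOn_remainder hf J)
    (isBigO_remainder_top hε hdecay J (z.re + 1)) (lt_add_one _)
    (isBigO_remainder_zero J hexp b hb1) hb2

lemma differentiableAt_mellin_remainder (hf : ContinuousOn f (Ioi 0)) (hε : 0 < ε)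
    (hdecay : ∀ t : ℝ, 1 ≤ t → ‖f t‖ ≤ C₀ * Real.exp (-ε * t)) (J : ℕ)
    (hexp : ∃ C : ℝ, ∀ t : ℝ, 0 < t → t ≤ 1 →
      ‖f t - ∑ j ∈ Finset.range J, ∑ i ∈ Finset.range (k j + 1),
          a j i * (t : ℂ) ^ (α j) * (Complex.ofReal (Real.log t)) ^ i‖
        ≤ C * t ^ (α J).re * (1 + |Real.log t| ^ (k J)))
    (z : ℂ) (hz : -(α J).re < z.re) :
    DifferentiableAt ℂ (mellin fun t => f t - cutSum α k a J t) z := by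
  obtain ⟨b, hb1, hb2⟩ := exists_between hz
  exact mellin_differentiableAt_of_isBigO_rpow (locallyIntegrableOn_remainder hf J)
    (isBigO_remainder_top hε hdecay J (z.re + 1)) (lt_add_one _)
    (isBigO_remainder_zero J hexp b hb1) hb2

end Remainder

/-! ### Identity theorem and the residue -/

/-- Identity theorem for meromorphic functions on a preconnected set. -/
lemma eventuallyEq_of_meromorphicOn {U : Set ℂ} (hU : IsPreconnected U) {F G : ℂ → ℂ}
    (hF : MeromorphicOn F U) (hG : MeromorphicOn G U) {x y : ℂ} (hx : x ∈ U) (hy : y ∈ U)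
    (h : ∀ᶠ s in nhds x, F s = G s) : ∀ᶠ s in nhdsWithin y {y}ᶜ, F s = G s := by
  have htop : meromorphicOrderAt (F - G) y = ⊤ := by
    by_contra hne
    refine (hF.sub hG).meromorphicOrderAt_ne_top_of_isPreconnected hU hy hx hne ?_
    rw [meromorphicOrderAt_eq_top_iff]
    filter_upwards [h.filter_mono nhdsWithin_le_nhds] with s hs
    simp [hs]
  filter_upwards [meromorphicOrderAt_eq_top_iff.1 htop] with s hs
  exact sub_eq_zero.1 hs

/-- (Lemma 1.1, case (1): `α j ∉ ℤ₊`.)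
Let `f : (0,∞) → ℂ` be continuous, exponentially decaying at `∞`, with
expansion data `(α, k, a)`, and let `ηt` be the meromorphic continuation of
`η(s) = (1/Γ((s+1)/2)) ∫₀^∞ t^((s-1)/2) f(t) dt` to `ℂ`.  If `α j` is not a
nonnegative integer, then `ηt` has a pole of order at most `k j + 1` at
`s_j = -2 α j - 1`: the function `s ↦ (s - s_j)^(k j + 1) · ηt s` extends
holomorphically across `s_j`, with value
`(-1)^(k j) (k j)! 2^(k j + 1) a j (k j) / Γ(-α j)` there. -/
theorem statement3 (f : ℝ → ℂ) (hf : ContinuousOn f (Ioi 0))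
    (C₀ ε : ℝ) (hC₀ : 0 < C₀) (hε : 0 < ε)
    (hdecay : ∀ t : ℝ, 1 ≤ t → ‖f t‖ ≤ C₀ * Real.exp (-ε * t))
    (α : ℕ → ℂ) (k : ℕ → ℕ) (a : ℕ → ℕ → ℂ)
    (hinj : Function.Injective α)
    (hmono : Monotone fun j => (α j).re)
    (htend : Tendsto (fun j => (α j).re) atTop atTop)
    (hexp : ∀ j₀ : ℕ, ∃ C : ℝ, ∀ t : ℝ, 0 < t → t ≤ 1 →
      ‖f t - ∑ j ∈ Finset.range j₀, ∑ i ∈ Finset.range (k j + 1),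
          a j i * (t : ℂ) ^ (α j) * (Complex.ofReal (Real.log t)) ^ i‖
        ≤ C * t ^ (α j₀).re * (1 + |Real.log t| ^ (k j₀)))
    (ηt : ℂ → ℂ)
    (hmero : MeromorphicOn ηt Set.univ)
    (hagree : ∀ s : ℂ, -2 * (α 0).re - 1 < s.re →
      ηt s = (1 / Complex.Gamma ((s + 1) / 2)) *
        ∫ t in Ioi (0 : ℝ), (t : ℂ) ^ ((s - 1) / 2) * f t)
    (hholo : DifferentiableOn ℂ ηt {s : ℂ | ∀ i : ℕ, s ≠ -2 * α i - 1})
    (j : ℕ) (hαj : ∀ m : ℕ, α j ≠ (m : ℂ)) :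
    ∃ g : ℂ → ℂ, AnalyticAt ℂ g (-2 * α j - 1) ∧
      (∀ᶠ s in nhdsWithin (-2 * α j - 1) {(-2 * α j - 1)}ᶜ,
        g s = (s - (-2 * α j - 1)) ^ (k j + 1) * ηt s) ∧
      g (-2 * α j - 1) =
        (-1) ^ (k j) * (Nat.factorial (k j) : ℂ) * 2 ^ (k j + 1) * a j (k j) /
          Complex.Gamma (-α j) := by
  obtain ⟨J, hJ⟩ := (htend.eventually (eventually_gt_atTop (α j).re)).exists
  have hjJ : j < J := by
    by_contra hcon
    exact absurd (hmono (not_lt.1 hcon)) (not_le.2 hJ)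
  set s₀ : ℂ := -2 * α j - 1 with hs₀
  set R : ℂ → ℂ := mellin fun t => f t - cutSum α k a J t with hR
  set P : ℕ → ℂ → ℂ := fun l s => ∑ i ∈ Finset.range (k l + 1),
    a l i * ((-1) ^ i * (Nat.factorial i : ℂ) / ((s + 1) / 2 + α l) ^ (i + 1)) with hP
  set E : ℂ → ℂ := fun s => (Complex.Gamma ((s + 1) / 2))⁻¹ *
    (R ((s + 1) / 2) + ∑ l ∈ Finset.range J, P l s) with hE
  set U : Set ℂ := {s : ℂ | -2 * (α J).re - 1 < s.re} with hUdef
  have hre : ∀ s : ℂ, ((s + 1) / 2).re = (s.re + 1) / 2 := fun s => by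
    simp
  have hUo : IsOpen U := isOpen_lt continuous_const Complex.continuous_re
  have hUc : IsPreconnected U := (convex_halfSpace_re_gt _).isPreconnected
  have hs₀U : s₀ ∈ U := by
    simp only [hUdef, mem_ofPred_eq, hs₀, Complex.sub_re, Complex.mul_re, Complex.neg_re,
      Complex.neg_im, Complex.re_ofNat, Complex.im_ofNat, Complex.one_re]
    linarith
  have hRan : ∀ s ∈ U, AnalyticAt ℂ (fun s => R ((s + 1) / 2)) s := by
    have hd : DifferentiableOn ℂ (fun s => R ((s + 1) / 2)) U := by
      intro s hs
      have hs' : -2 * (α J).re - 1 < s.re := hs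
      have h1 := differentiableAt_mellin_remainder hf hε hdecay J (hexp J) ((s + 1) / 2)
        (by rw [hre]; linarith)
      have h2 : DifferentiableAt ℂ (fun s : ℂ => (s + 1) / 2) s := by fun_prop
      exact (h1.comp s h2).differentiableWithinAt
    exact fun s hs => hd.analyticAt (hUo.mem_nhds hs)
  have hGan : ∀ s, AnalyticAt ℂ (fun s => (Complex.Gamma ((s + 1) / 2))⁻¹) s := by
    have h2 : Differentiable ℂ (fun s : ℂ => (s + 1) / 2) := by fun_prop
    exact fun s => (Complex.differentiable_one_div_Gamma.comp h2).analyticAt s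
  have hPmer : ∀ l s, MeromorphicAt (P l) s := by
    intro l s
    simp only [hP]
    fun_prop
  have hEmer : MeromorphicOn E U := by
    intro s hs
    exact (hGan s).meromorphicAt.fun_mul ((hRan s hs).meromorphicAt.fun_add
      (MeromorphicAt.fun_sum fun l _ => hPmer l s))
  have hconv : ∀ s : ℂ, -2 * (α 0).re - 1 < s.re → ηt s = E s := by
    intro s hs
    have hz : ∀ l, -(α l).re < ((s + 1) / 2).re := fun l => by
      have : (α 0).re ≤ (α l).re := hmono (Nat.zero_le l)
      rw [hre]
      linarith
    have h1 := mellinConvergent_remainder hf hε hdecay J (hexp J) ((s + 1) / 2) (hz J)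
    have h2 := hasMellin_cutSum α k a J ((s + 1) / 2) fun l _ => hz l
    have h3 := (hasMellin_add h1 h2.1).2
    rw [h2.2] at h3
    simp only [sub_add_cancel] at h3
    rw [hagree s hs, hE, one_div]
    simp only [hP, hR]
    rw [← h3, mellin]
    congr 2
    ext t
    rw [smul_eq_mul]
    congr 2
    ring
  have hEeq : ∀ᶠ s in nhdsWithin s₀ {s₀}ᶜ, ηt s = E s := by
    have hx : -2 * (α 0).re - 1 < (((-2 * (α 0).re : ℝ) : ℂ)).re := by
      rw [Complex.ofReal_re]
      linarith
    have h0J : (α 0).re ≤ (α J).re := hmono (Nat.zero_le J)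
    refine eventuallyEq_of_meromorphicOn hUc (fun s _ => hmero s (mem_univ s)) hEmer
      (x := ((-2 * (α 0).re : ℝ) : ℂ)) ?_ hs₀U ?_
    · exact lt_of_le_of_lt (by linarith) hx
    · filter_upwards [(isOpen_lt continuous_const Complex.continuous_re).mem_nhds hx] with s hs
      exact hconv s hs
  have hPan : ∀ l, l ≠ j → AnalyticAt ℂ (P l) s₀ := by
    intro l hl
    have hne : (s₀ + 1) / 2 + α l ≠ 0 := fun h => hl (hinj (by
      rw [hs₀] at h
      linear_combination h))
    simp only [hP]
    refine Finset.analyticAt_fun_sum _ fun i _ => analyticAt_const.mul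
      (analyticAt_const.div (by fun_prop) (pow_ne_zero _ hne))
  set Q : ℂ → ℂ := fun s => ∑ i ∈ Finset.range (k j + 1),
    a j i * ((-1) ^ i * (Nat.factorial i : ℂ)) * 2 ^ (i + 1) * (s - s₀) ^ (k j - i) with hQ
  refine ⟨fun s => (Complex.Gamma ((s + 1) / 2))⁻¹ * ((s - s₀) ^ (k j + 1) *
    (R ((s + 1) / 2) + ∑ l ∈ (Finset.range J).erase j, P l s) + Q s), ?_, ?_, ?_⟩
  · refine (hGan s₀).mul (AnalyticAt.add (AnalyticAt.mul (by fun_prop)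
      ((hRan s₀ hs₀U).add ?_)) ?_)
    · exact Finset.analyticAt_fun_sum _ fun l hl => hPan l (Finset.ne_of_mem_erase hl)
    · simp only [hQ]
      fun_prop
  · filter_upwards [hEeq, self_mem_nhdsWithin] with s hs hne
    have hne' : s - s₀ ≠ 0 := sub_ne_zero.2 hne
    have hQP : Q s = (s - s₀) ^ (k j + 1) * P j s := by
      simp only [hQ, hP, Finset.mul_sum]
      refine Finset.sum_congr rfl fun i hi => ?_
      have hi' : i ≤ k j := Nat.lt_succ_iff.1 (Finset.mem_range.1 hi)
      have hlin : (s + 1) / 2 + α j = (s - s₀) / 2 := by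
        rw [hs₀]
        ring
      have hpow : (s - s₀) ^ (k j + 1) = (s - s₀) ^ (k j - i) * (s - s₀) ^ (i + 1) := by
        rw [← pow_add]
        congr 1
        omega
      rw [hlin, hpow, div_pow]
      field_simp
    rw [hs, hQP, hE]
    simp only
    rw [← Finset.add_sum_erase _ (fun l => P l s) (Finset.mem_range.2 hjJ)]
    ring
  · have hz : (s₀ + 1) / 2 = -α j := by
      rw [hs₀]
      ring
    have hQ0 : Q s₀ = a j (k j) * ((-1) ^ (k j) * (Nat.factorial (k j) : ℂ)) * 2 ^ (k j + 1) := by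
      simp only [hQ]
      -- At `s₀` the factor `0 ^ (k j - i)` kills every term except `i = k j`.
      rw [Finset.sum_eq_single_of_mem (k j) (Finset.self_mem_range_succ _)]
      · simp
      · intro i hi hik
        have : k j - i ≠ 0 := by
          have := Finset.mem_range.1 hi
          omega
        simp [this]
    simp only [hQ0, hz, sub_self]
    rw [zero_pow (Nat.succ_ne_zero _)]
    ring
end

section
/- Let f : (0,∞) → ℂ be continuous with |f(t)| ≤ C e^{-εt} for t ≥ 1 (some C, ε > 0), let (α, k, a) be expansion data for f, set s_j := −2α_j − 1, and let η̃ be the meromorphic continuation to ℂ of η(s) := (1/Γ((s+1)/2)) ∫₀^∞ t^{(s-1)/2} f(t) dt. Fix j with α_j ∈ {0, 1, 2, ...} (a nonnegative integer). Then the function s ↦ (s − s_j)^{k_j} η̃(s) extends holomorphically to a neighborhood of s_j, with value at s_j equal to (−1)^{k_j + α_j} α_j! k_j! 2^{k_j} a_{j, k_j}. In particular η̃ has a pole of order at most k_j at s_j, and Res_{k_j} η̃(s_j) = (−1)^{k_j+α_j} α_j! k_j! 2^{k_j} a_{j,k_j}. -/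
open MeasureTheory Set Filter

/-!
Put `w = (s + 1) / 2`, so that `η` is `1 / Γ(w)` times the Mellin transform of `f` at `w`.
Subtract from `f` the first `N` blocks of its expansion at `0`, cut off to `(0, 1]`. The remainder
is `O(t ^ (-b))` at `0` for every `b > -Re α_N` and decays exponentially at infinity, so its Mellin
transform is holomorphic on `Re w > -Re α_N` (`analyticAt_mellin_remainder`). The Mellin transform
of the cut-off term `t ^ α (log t) ^ i` is `(-1) ^ i i! / (w + α) ^ (i + 1)`
(`hasMellin_cpow_logIoc`), so the subtracted blocks contribute explicit polar parts `polarSum`.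

This gives an explicit meromorphic continuation of `η` to `Re w > -Re α_N`. It agrees with the given
one on a punctured neighbourhood of `s_j` by the identity theorem
(`eventuallyEq_punctured_of_halfPlane`) as soon as `Re α_N > Re α_j`. Since the `α_l` are distinct,
only the `j`-th polar part is singular at `w = -α_j`, with a pole of order at most `k_j + 1`. When
`α_j = m` is a natural number, `1 / Γ(w)` has a simple zero there, with derivative `(-1) ^ m m!`
(`inv_Gamma_factor`, `prod_neg_add`); it absorbs one order of the pole, and the coefficient of
`(s - s_j) ^ (-k_j)` is read off.
-/

open scoped Topology

/-! ### Mellin transforms of truncated powers and logarithms -/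

/-- The function `(log t) ^ i` cut off to `(0, 1]`. -/
noncomputable def logIoc (i : ℕ) : ℝ → ℂ :=
  indicator (Ioc 0 1) fun t => (Real.log t : ℂ) ^ i

lemma log_pow_isBigO (i : ℕ) {b : ℝ} (hb : 0 < b) :
    (fun t : ℝ => |Real.log t| ^ i) =O[𝓝[>] 0] fun t => t ^ (-b) := by
  simpa using (isLittleO_abs_log_rpow_rpow_nhdsGT_zero (i : ℝ) (neg_lt_zero.2 hb)).isBigO

lemma logIoc_isBigO_zero (i : ℕ) {b : ℝ} (hb : 0 < b) :
    logIoc i =O[𝓝[>] 0] fun t : ℝ => t ^ (-b) := by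
  refine Asymptotics.IsBigO.trans (.of_bound 1 ?_) (log_pow_isBigO i hb)
  filter_upwards [Ioc_mem_nhdsGT one_pos] with t ht
  simp [logIoc, ht]

lemma logIoc_eventually_zero (i : ℕ) : logIoc i =ᶠ[atTop] 0 := by
  filter_upwards [eventually_gt_atTop 1] with t ht
  simp [logIoc, ht]

lemma log_smul_logIoc (i : ℕ) : (fun t => Real.log t • logIoc i t) = logIoc (i + 1) := by
  ext t
  by_cases ht : t ∈ Ioc (0 : ℝ) 1
  · simp [logIoc, ht, pow_succ']
  · simp [logIoc, ht]

/-- By induction on `i`: multiplying by `log` differentiates the Mellin transform. -/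
lemma hasMellin_logIoc (i : ℕ) {w : ℂ} (hw : 0 < w.re) :
    HasMellin (logIoc i) w ((-1) ^ i * (i.factorial : ℂ) / w ^ (i + 1)) := by
  induction i generalizing w with
  | zero => simpa [logIoc] using hasMellin_one_Ioc hw
  | succ i ih =>
    have hloc : LocallyIntegrableOn (logIoc i) (Ioi 0) := by
      have := (ih (w := 1) (by simp)).1
      simp only [MellinConvergent, sub_self, Complex.cpow_zero, one_smul] at this
      exact this.locallyIntegrableOn
    have key := mellin_hasDerivAt_of_isBigO_rpow (a := w.re + 1) (b := w.re / 2) hloc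
      ((logIoc_eventually_zero i).trans_isBigO (Asymptotics.isBigO_zero _ _)) (lt_add_one _)
      (logIoc_isBigO_zero i (by positivity)) (by linarith)
    rw [log_smul_logIoc] at key
    refine ⟨key.1, ?_⟩
    have hw0 : w ≠ 0 := by rintro rfl; simp at hw
    have hev : mellin (logIoc i) =ᶠ[𝓝 w]
        fun z => (-1) ^ i * (i.factorial : ℂ) / z ^ (i + 1) := by
      filter_upwards [(isOpen_lt continuous_const Complex.continuous_re).mem_nhds hw] with z hz
      exact (ih hz).2
    have hd : HasDerivAt (fun z : ℂ => (-1) ^ i * (i.factorial : ℂ) / z ^ (i + 1))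
        ((-1) ^ (i + 1) * ((i + 1).factorial : ℂ) / w ^ (i + 1 + 1)) w := by
      have h := (hasDerivAt_const w ((-1) ^ i * (i.factorial : ℂ))).fun_div
        (hasDerivAt_pow (i + 1) w) (pow_ne_zero _ hw0)
      refine h.congr_deriv ?_
      rw [Nat.factorial_succ]
      push_cast
      field_simp
      simp
      ring
    exact key.2.unique (hd.congr_of_eventuallyEq hev)

lemma hasMellin_cpow_logIoc (α : ℂ) (i : ℕ) {w : ℂ} (hw : 0 < (w + α).re) :
    HasMellin (fun t : ℝ => (t : ℂ) ^ α • logIoc i t) w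
      ((-1) ^ i * (i.factorial : ℂ) / (w + α) ^ (i + 1)) := by
  have h := hasMellin_logIoc i hw
  exact ⟨MellinConvergent.cpow_smul.2 h.1, (mellin_cpow_smul _ _ _).trans h.2⟩

lemma locallyIntegrableOn_cpow_logIoc (α : ℂ) (i : ℕ) :
    LocallyIntegrableOn (fun t : ℝ => (t : ℂ) ^ α • logIoc i t) (Ioi 0) := by
  have h := (hasMellin_cpow_logIoc α i (w := 1 - α) (by simp)).1
  have h' := (hasMellin_logIoc i (w := 1) (by simp)).1
  simp only [MellinConvergent, sub_self, Complex.cpow_zero, one_smul] at h'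
  refine h'.locallyIntegrableOn.continuousOn_smul isOpen_Ioi.isLocallyClosed ?_
  intro t ht
  exact (Complex.continuousAt_ofReal_cpow_const t α (Or.inr (ne_of_gt ht))).continuousWithinAt

lemma hasMellin_finsetSum {ι : Type*} (s : Finset ι) (F : ι → ℝ → ℂ) (w : ℂ) (v : ι → ℂ)
    (h : ∀ i ∈ s, HasMellin (F i) w (v i)) :
    HasMellin (fun t => ∑ i ∈ s, F i t) w (∑ i ∈ s, v i) := by
  refine ⟨?_, ?_⟩
  · simp only [MellinConvergent, Finset.smul_sum]
    exact integrable_finsetSum s fun i hi => (h i hi).1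
  · simp only [mellin, Finset.smul_sum]
    rw [integral_finsetSum s fun i hi => (h i hi).1]
    exact Finset.sum_congr rfl fun i hi => (h i hi).2

/-! ### Subtracting the expansion -/

/-- The first `N` blocks of the expansion at `0`, cut off to `(0, 1]` so that the difference with
`f` keeps the decay of `f` at infinity. -/
noncomputable def expansionIoc (α : ℕ → ℂ) (k : ℕ → ℕ) (a : ℕ → ℕ → ℂ) (N : ℕ) (t : ℝ) : ℂ :=
  ∑ l ∈ Finset.range N, ∑ i ∈ Finset.range (k l + 1), a l i • ((t : ℂ) ^ α l • logIoc i t)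

/-- The polar part at `w = -α l` of the Mellin transform: the continuation of the Mellin transform
of the `l`-th block of `expansionIoc`. -/
noncomputable def polarSum (α : ℕ → ℂ) (k : ℕ → ℕ) (a : ℕ → ℕ → ℂ) (l : ℕ) (w : ℂ) : ℂ :=
  ∑ i ∈ Finset.range (k l + 1),
    a l i * ((-1) ^ i * (i.factorial : ℂ) / (w + α l) ^ (i + 1))

lemma hasMellin_expansionIoc (α : ℕ → ℂ) (k : ℕ → ℕ) (a : ℕ → ℕ → ℂ) (N : ℕ) {w : ℂ}
    (hw : ∀ l, 0 < (w + α l).re) :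
    HasMellin (expansionIoc α k a N) w (∑ l ∈ Finset.range N, polarSum α k a l w) := by
  refine hasMellin_finsetSum _ _ _ _ fun l _ => hasMellin_finsetSum _ _ _ _ fun i _ => ?_
  have h := hasMellin_cpow_logIoc (α l) i (hw l)
  have h2 := hasMellin_const_smul h.1 (a l i)
  rwa [h.2] at h2

lemma remainder_locallyIntegrableOn {f : ℝ → ℂ} (hf : ContinuousOn f (Ioi 0))
    (α : ℕ → ℂ) (k : ℕ → ℕ) (a : ℕ → ℕ → ℂ) (N : ℕ) :
    LocallyIntegrableOn (fun t => f t - expansionIoc α k a N t) (Ioi 0) := by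
  refine (hf.locallyIntegrableOn measurableSet_Ioi).sub ?_
  have hsum : ∀ {s : Finset ℕ} {F : ℕ → ℝ → ℂ},
      (∀ i ∈ s, LocallyIntegrableOn (F i) (Ioi 0)) →
      LocallyIntegrableOn (fun t => ∑ i ∈ s, F i t) (Ioi (0 : ℝ)) := by
    intro s F h
    induction s using Finset.induction_on with
    | empty => simpa using (locallyIntegrable_zero).locallyIntegrableOn (Ioi (0 : ℝ))
    | insert i s hi ih =>
      simp only [Finset.sum_insert hi]
      exact (h i (by simp)).add (ih fun j hj => h j (by simp [hj]))
  exact hsum fun l _ => hsum fun i _ => (locallyIntegrableOn_cpow_logIoc (α l) i).smul (a l i)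

/-- The logarithms in the error term cost an arbitrarily small power of `t`, hence the strict
inequality on `b`. -/
lemma remainder_isBigO_zero {f : ℝ → ℂ} {α : ℕ → ℂ} {k : ℕ → ℕ} {a : ℕ → ℕ → ℂ} {N : ℕ}
    {C : ℝ} (hC : ∀ t : ℝ, 0 < t → t ≤ 1 →
      ‖f t - ∑ j ∈ Finset.range N, ∑ i ∈ Finset.range (k j + 1),
          a j i * (t : ℂ) ^ (α j) * (Complex.ofReal (Real.log t)) ^ i‖
        ≤ C * t ^ (α N).re * (1 + |Real.log t| ^ (k N))) {b : ℝ} (hb : -(α N).re < b) :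
    (fun t => f t - expansionIoc α k a N t) =O[𝓝[>] 0] fun t : ℝ => t ^ (-b) := by
  have hd : 0 < b + (α N).re := by linarith
  have h1 : (fun t : ℝ => 1 + |Real.log t| ^ (k N)) =O[𝓝[>] 0]
      fun t => t ^ (-(b + (α N).re)) := by
    refine Asymptotics.IsBigO.add ?_ (log_pow_isBigO (k N) hd)
    simpa using log_pow_isBigO 0 hd
  have h2 : (fun t : ℝ => C * t ^ (α N).re * (1 + |Real.log t| ^ (k N))) =O[𝓝[>] 0]
      fun t : ℝ => t ^ (α N).re * t ^ (-(b + (α N).re)) :=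
    ((Asymptotics.isBigO_refl _ _).const_mul_left C).mul h1
  refine Asymptotics.IsBigO.trans (.of_bound 1 ?_) (h2.congr' .rfl ?_)
  · filter_upwards [Ioc_mem_nhdsGT one_pos] with t ht
    have : expansionIoc α k a N t = ∑ j ∈ Finset.range N, ∑ i ∈ Finset.range (k j + 1),
          a j i * (t : ℂ) ^ (α j) * (Complex.ofReal (Real.log t)) ^ i := by
      simp [expansionIoc, logIoc, ht, mul_assoc]
    rw [this, one_mul]
    exact (hC t ht.1 ht.2).trans (Real.le_norm_self _)
  · filter_upwards [self_mem_nhdsWithin] with t ht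
    rw [← Real.rpow_add ht]
    congr 1
    ring

lemma remainder_isBigO_top {f : ℝ → ℂ} {C₀ ε : ℝ}
    (hdecay : ∀ t : ℝ, 1 ≤ t → ‖f t‖ ≤ C₀ * Real.exp (-ε * t))
    (α : ℕ → ℂ) (k : ℕ → ℕ) (a : ℕ → ℕ → ℂ) (N : ℕ) :
    (fun t => f t - expansionIoc α k a N t) =O[atTop] fun t => Real.exp (-ε * t) := by
  refine .of_bound C₀ ?_
  filter_upwards [eventually_gt_atTop 1] with t ht
  have : expansionIoc α k a N t = 0 := by simp [expansionIoc, logIoc, ht]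
  rw [this, sub_zero, Real.norm_of_nonneg (Real.exp_pos _).le]
  exact hdecay t ht.le

/-! ### The zero of the reciprocal Gamma function -/

/-- The simple zero of `1 / Γ` at `-m` is split off explicitly; the cofactor is entire. -/
lemma inv_Gamma_factor (m : ℕ) (w : ℂ) :
    (Complex.Gamma w)⁻¹ =
      (w + m) * ((∏ i ∈ Finset.range m, (w + i)) * (Complex.Gamma (w + m + 1))⁻¹) := by
  induction m with
  | zero => simpa using Complex.one_div_Gamma_eq_self_mul_one_div_Gamma_add_one w
  | succ m ih =>
    rw [ih, Finset.prod_range_succ, Complex.one_div_Gamma_eq_self_mul_one_div_Gamma_add_one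
      (w + m + 1)]
    push_cast
    ring_nf

lemma prod_neg_add (m : ℕ) :
    ∏ i ∈ Finset.range m, (-(m : ℂ) + i) = (-1) ^ m * (m.factorial : ℂ) := by
  induction m with
  | zero => simp
  | succ m ih =>
    rw [Finset.prod_range_succ', Nat.factorial_succ]
    have : ∀ i ∈ Finset.range m, (-((m + 1 : ℕ) : ℂ) + ((i + 1 : ℕ) : ℂ)) = -(m : ℂ) + i := by
      intro i _; push_cast; ring
    rw [Finset.prod_congr rfl this, ih]
    push_cast
    ring

/-! ### Analytic continuation -/

/-- Identity theorem for meromorphic functions on a half-plane: agreement on a smaller half-plane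
propagates to every punctured neighbourhood. -/
lemma eventuallyEq_punctured_of_halfPlane {u v : ℂ → ℂ} {c d : ℝ}
    (hu : MeromorphicOn u {s | c < s.re}) (hv : MeromorphicOn v {s | c < s.re})
    (huv : ∀ s : ℂ, d < s.re → u s = v s) {s₀ : ℂ} (hs₀ : c < s₀.re) :
    ∀ᶠ s in 𝓝[≠] s₀, u s = v s := by
  have hm := hu.sub hv
  have hpre : IsPreconnected {s : ℂ | c < s.re} := (convex_halfSpace_re_gt c).isPreconnected
  by_contra hne
  have hord : meromorphicOrderAt (u - v) s₀ ≠ ⊤ := by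
    rw [Ne, meromorphicOrderAt_eq_top_iff]
    simpa [sub_eq_zero] using hne
  -- The hypothesis `huv` applies on a neighbourhood of this point of the half-plane.
  let x : ℂ := ((max c d + 1 : ℝ) : ℂ)
  have hx : max c d < x.re := by simp [x]
  refine hm.meromorphicOrderAt_ne_top_of_isPreconnected hpre hs₀
    (y := x) ((le_max_left c d).trans_lt hx) hord ?_
  rw [meromorphicOrderAt_eq_top_iff]
  refine Eventually.filter_mono nhdsWithin_le_nhds ?_
  filter_upwards [(isOpen_lt continuous_const Complex.continuous_re).mem_nhds
    ((le_max_right c d).trans_lt hx)] with s hs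
  simp [huv s hs]

lemma meromorphicAt_polarSum (α : ℕ → ℂ) (k : ℕ → ℕ) (a : ℕ → ℕ → ℂ) (l : ℕ) (s : ℂ) :
    MeromorphicAt (fun s => polarSum α k a l ((s + 1) / 2)) s := by
  unfold polarSum
  exact MeromorphicAt.fun_sum fun i _ => by fun_prop

lemma analyticAt_polarSum {α : ℕ → ℂ} (k : ℕ → ℕ) (a : ℕ → ℕ → ℂ) {l : ℕ} {s : ℂ}
    (hs : (s + 1) / 2 + α l ≠ 0) :
    AnalyticAt ℂ (fun s => polarSum α k a l ((s + 1) / 2)) s := by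
  unfold polarSum
  refine Finset.analyticAt_fun_sum _ fun i _ => ?_
  have : ((s + 1) / 2 + α l) ^ (i + 1) ≠ 0 := pow_ne_zero _ hs
  fun_prop (disch := assumption)

/-- Subtracting `N` blocks of the expansion moves the abscissa of convergence to `-(α N).re`. -/
lemma analyticAt_mellin_remainder {f : ℝ → ℂ} (hf : ContinuousOn f (Ioi 0))
    {C₀ ε : ℝ} (hε : 0 < ε) (hdecay : ∀ t : ℝ, 1 ≤ t → ‖f t‖ ≤ C₀ * Real.exp (-ε * t))
    {α : ℕ → ℂ} {k : ℕ → ℕ} {a : ℕ → ℕ → ℂ} {N : ℕ}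
    {C : ℝ} (hC : ∀ t : ℝ, 0 < t → t ≤ 1 →
      ‖f t - ∑ j ∈ Finset.range N, ∑ i ∈ Finset.range (k j + 1),
          a j i * (t : ℂ) ^ (α j) * (Complex.ofReal (Real.log t)) ^ i‖
        ≤ C * t ^ (α N).re * (1 + |Real.log t| ^ (k N)))
    {w : ℂ} (hw : -(α N).re < w.re) :
    MellinConvergent (fun t => f t - expansionIoc α k a N t) w ∧
      AnalyticAt ℂ (mellin fun t => f t - expansionIoc α k a N t) w := by
  have hloc := remainder_locallyIntegrableOn hf α k a N
  have htop := remainder_isBigO_top hdecay α k a N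
  constructor
  · obtain ⟨b, hb, hbw⟩ := exists_between hw
    exact mellinConvergent_of_isBigO_rpow_exp hε hloc htop (remainder_isBigO_zero hC hb) hbw
  · rw [Complex.analyticAt_iff_eventually_differentiableAt]
    filter_upwards [(isOpen_lt continuous_const Complex.continuous_re).mem_nhds hw] with z hz
    obtain ⟨b, hb, hbz⟩ := exists_between (show -(α N).re < z.re from hz)
    exact mellin_differentiableAt_of_isBigO_rpow_exp hε hloc htop
      (remainder_isBigO_zero hC hb) hbz

/-- Clearing the pole of order `k j + 1` turns the polar part into a polynomial in `w + α j`. -/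
lemma polarSum_mul_pow (α : ℕ → ℂ) (k : ℕ → ℕ) (a : ℕ → ℕ → ℂ) (j : ℕ) {w : ℂ}
    (hw : w + α j ≠ 0) :
    (w + α j) ^ (k j + 1) * polarSum α k a j w =
      ∑ i ∈ Finset.range (k j + 1),
        a j i * ((-1) ^ i * (i.factorial : ℂ)) * (w + α j) ^ (k j - i) := by
  rw [polarSum, Finset.mul_sum]
  refine Finset.sum_congr rfl fun i hi => ?_
  have : k j + 1 = (k j - i) + (i + 1) := by
    have := Finset.mem_range.1 hi; omega
  rw [this, pow_add]
  field_simp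

/-- (Lemma 1.1, case (2): `α j ∈ ℤ₊`.)
Let `f : (0,∞) → ℂ` be continuous, exponentially decaying at `∞`, with
expansion data `(α, k, a)`, and let `ηt` be the meromorphic continuation of
`η(s) = (1/Γ((s+1)/2)) ∫₀^∞ t^((s-1)/2) f(t) dt` to `ℂ`.  If `α j = m` is a
nonnegative integer, then `ηt` has a pole of order at most `k j` at
`s_j = -2 α j - 1`: the function `s ↦ (s - s_j)^(k j) · ηt s` extends
holomorphically across `s_j`, with value
`(-1)^(k j + m) · m! · (k j)! · 2^(k j) · a j (k j)` there. -/
theorem statement4 (f : ℝ → ℂ) (hf : ContinuousOn f (Ioi 0))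
    (C₀ ε : ℝ) (hC₀ : 0 < C₀) (hε : 0 < ε)
    (hdecay : ∀ t : ℝ, 1 ≤ t → ‖f t‖ ≤ C₀ * Real.exp (-ε * t))
    (α : ℕ → ℂ) (k : ℕ → ℕ) (a : ℕ → ℕ → ℂ)
    (hinj : Function.Injective α)
    (hmono : Monotone fun j => (α j).re)
    (htend : Tendsto (fun j => (α j).re) atTop atTop)
    (hexp : ∀ j₀ : ℕ, ∃ C : ℝ, ∀ t : ℝ, 0 < t → t ≤ 1 →
      ‖f t - ∑ j ∈ Finset.range j₀, ∑ i ∈ Finset.range (k j + 1),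
          a j i * (t : ℂ) ^ (α j) * (Complex.ofReal (Real.log t)) ^ i‖
        ≤ C * t ^ (α j₀).re * (1 + |Real.log t| ^ (k j₀)))
    (ηt : ℂ → ℂ)
    (hmero : MeromorphicOn ηt Set.univ)
    (hagree : ∀ s : ℂ, -2 * (α 0).re - 1 < s.re →
      ηt s = (1 / Complex.Gamma ((s + 1) / 2)) *
        ∫ t in Ioi (0 : ℝ), (t : ℂ) ^ ((s - 1) / 2) * f t)
    (hholo : DifferentiableOn ℂ ηt {s : ℂ | ∀ i : ℕ, s ≠ -2 * α i - 1})
    (j : ℕ) (m : ℕ) (hαj : α j = (m : ℂ)) :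
    ∃ g : ℂ → ℂ, AnalyticAt ℂ g (-2 * α j - 1) ∧
      (∀ᶠ s in nhdsWithin (-2 * α j - 1) {(-2 * α j - 1)}ᶜ,
        g s = (s - (-2 * α j - 1)) ^ (k j) * ηt s) ∧
      g (-2 * α j - 1) =
        (-1) ^ (k j + m) * (Nat.factorial m : ℂ) * (Nat.factorial (k j) : ℂ) *
          2 ^ (k j) * a j (k j) := by
  obtain ⟨N, hN, hjN⟩ := ((htend.eventually_gt_atTop (α j).re).and (eventually_gt_atTop j)).exists
  obtain ⟨C, hC⟩ := hexp N
  set M : ℂ → ℂ := mellin fun t => f t - expansionIoc α k a N t with hM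
  have hre : ∀ s : ℂ, ((s + 1) / 2).re = (s.re + 1) / 2 := by
    intro s
    rw [show (s + 1) / 2 = (s + 1) / ((2 : ℝ) : ℂ) by simp, Complex.div_ofReal_re]
    simp
  have hMan : ∀ s : ℂ, -2 * (α N).re - 1 < s.re →
      AnalyticAt ℂ (fun s => M ((s + 1) / 2)) s := by
    intro s hs
    have h := (analyticAt_mellin_remainder hf hε hdecay hC (w := (s + 1) / 2)
      (by rw [hre]; linarith)).2
    exact h.fun_comp (f := fun s : ℂ => (s + 1) / 2) (by fun_prop)
  have hΓ : ∀ z, AnalyticAt ℂ (fun w => (Complex.Gamma w)⁻¹) z :=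
    fun z => Complex.differentiable_one_div_Gamma.analyticAt z
  have hΓs : ∀ s, AnalyticAt ℂ (fun s => (Complex.Gamma ((s + 1) / 2))⁻¹) s :=
    fun s => (hΓ _).fun_comp (f := fun s : ℂ => (s + 1) / 2) (by fun_prop)
  have hsj : -2 * (α N).re - 1 < (-2 * α j - 1).re := by
    simp only [Complex.sub_re, Complex.mul_re, Complex.neg_re, Complex.neg_im, Complex.re_ofNat,
      Complex.im_ofNat, Complex.one_re]
    linarith
  -- On `-2 * (α N).re - 1 < s.re` the right-hand side is an explicit continuation of `η`.
  have hev : ∀ᶠ s in 𝓝[≠] (-2 * α j - 1), ηt s = (Complex.Gamma ((s + 1) / 2))⁻¹ *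
      (M ((s + 1) / 2) + ∑ l ∈ Finset.range N, polarSum α k a l ((s + 1) / 2)) := by
    refine eventuallyEq_punctured_of_halfPlane (c := -2 * (α N).re - 1)
      (d := -2 * (α 0).re - 1) (fun s _ => hmero s (mem_univ s)) (fun s hs => ?_)
      (fun s hs => ?_) hsj
    · exact (hΓs s).meromorphicAt.fun_mul ((hMan s hs).meromorphicAt.fun_add
        (MeromorphicAt.fun_sum fun l _ => meromorphicAt_polarSum α k a l s))
    · have h0 : ∀ l, (α 0).re ≤ (α l).re := fun l => hmono (Nat.zero_le l)
      have h1 := (analyticAt_mellin_remainder hf hε hdecay hC (w := (s + 1) / 2)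
        (by rw [hre]; linarith [h0 N])).1
      have h2 := hasMellin_expansionIoc α k a N (w := (s + 1) / 2)
        (fun l => by rw [Complex.add_re, hre]; linarith [h0 l])
      have h3 := (hasMellin_add h1 h2.1).2
      simp only [sub_add_cancel] at h3
      rw [hagree s hs, one_div, ← h2.2, ← h3, mellin]
      congr 2
      ext t
      rw [smul_eq_mul, show (s + 1) / 2 - 1 = (s - 1) / 2 by ring]
  -- With `w = (s + 1) / 2` one has `w + α j = (s - s_j) / 2`, whence the factor `2 ^ k j`: of the
  -- `k j + 1` factors `w + α j` cancelling the pole, one comes from the zero of `1 / Γ`.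
  refine ⟨fun s => ((∏ i ∈ Finset.range m, ((s + 1) / 2 + i)) *
      (Complex.Gamma ((s + 1) / 2 + m + 1))⁻¹) * 2 ^ k j *
      (((s + 1) / 2 + α j) ^ (k j + 1) * (M ((s + 1) / 2) +
        ∑ l ∈ (Finset.range N).erase j, polarSum α k a l ((s + 1) / 2)) +
      ∑ i ∈ Finset.range (k j + 1),
        a j i * ((-1) ^ i * (i.factorial : ℂ)) * ((s + 1) / 2 + α j) ^ (k j - i)), ?_, ?_, ?_⟩
  · have hΓ' : AnalyticAt ℂ (fun s => (Complex.Gamma ((s + 1) / 2 + m + 1))⁻¹) (-2 * α j - 1) :=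
      (hΓ _).fun_comp (f := fun s : ℂ => (s + 1) / 2 + m + 1) (by fun_prop)
    have hpol : AnalyticAt ℂ (fun s => ∑ l ∈ (Finset.range N).erase j,
        polarSum α k a l ((s + 1) / 2)) (-2 * α j - 1) := by
      refine Finset.analyticAt_fun_sum _ fun l hl => analyticAt_polarSum k a fun h => ?_
      refine (Finset.mem_erase.1 hl).1 (hinj ?_)
      linear_combination h
    have hprod : AnalyticAt ℂ (fun s : ℂ => ∏ i ∈ Finset.range m, ((s + 1) / 2 + i))
        (-2 * α j - 1) := Finset.analyticAt_fun_prod _ fun i _ => by fun_prop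
    have hsum : AnalyticAt ℂ (fun s : ℂ => ∑ i ∈ Finset.range (k j + 1),
        a j i * ((-1) ^ i * (i.factorial : ℂ)) * ((s + 1) / 2 + α j) ^ (k j - i))
        (-2 * α j - 1) := Finset.analyticAt_fun_sum _ fun i _ => by fun_prop
    have hMj := hMan _ hsj
    have hw : AnalyticAt ℂ (fun s : ℂ => ((s + 1) / 2 + α j) ^ (k j + 1)) (-2 * α j - 1) := by
      fun_prop
    exact ((hprod.fun_mul hΓ').fun_mul analyticAt_const).fun_mul
      ((hw.fun_mul (hMj.fun_add hpol)).fun_add hsum)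
  · filter_upwards [hev, self_mem_nhdsWithin] with s hs hne
    have hw : (s + 1) / 2 + α j ≠ 0 := fun h => hne (by
      rw [mem_singleton_iff]; linear_combination 2 * h)
    rw [hs, ← polarSum_mul_pow α k a j hw, inv_Gamma_factor m ((s + 1) / 2), ← hαj,
      ← Finset.add_sum_erase _ _ (Finset.mem_range.2 hjN),
      show s - (-2 * α j - 1) = 2 * ((s + 1) / 2 + α j) by ring, mul_pow]
    ring
  · have hw : (-2 * α j - 1 + 1) / 2 = -(m : ℂ) := by rw [hαj]; ring
    simp only [hw]
    simp only [hαj, neg_add_cancel, zero_add, Complex.Gamma_one, inv_one, mul_one,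
      prod_neg_add, zero_pow (Nat.succ_ne_zero _), zero_mul]
    -- At `w + m = 0` only the term `i = k j`, with exponent `k j - i = 0`, survives.
    rw [Finset.sum_eq_single (k j)]
    · simp only [Nat.sub_self, pow_zero]
      ring
    · intro i hi hik
      have : k j - i ≠ 0 := by have := Finset.mem_range.1 hi; omega
      simp [this]
    · simp
end

section
/- Let N ∈ ℕ, r ≥ 0, and let f : (0,∞) → ℂ be N times continuously differentiable. Suppose for each 0 ≤ j ≤ N there are C_j, ε > 0 with |f^{(j)}(t)| ≤ C_j e^{-εt} for t ≥ 1 and |f^{(j)}(t)| ≤ C_j t^{-r} for 0 < t ≤ 1. Then for every s ∈ ℂ with Re s > 2r − 1, both integrals below converge absolutely and ∫₀^∞ t^{(s-1)/2} f(t) dt = ((−1)^N 2^N / ((s+1)(s+3)⋯(s+2N−1))) ∫₀^∞ t^{(s-1)/2 + N} f^{(N)}(t) dt. -/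
open MeasureTheory Set

/-!
Put `a = (s + 1) / 2`, so that `Re s > 2r - 1` reads `Re a > r` and the left-hand integrand is
`t ^ (a - 1) * f t`. If `g` is `O(e^(-εt))` at `∞` and `O(t^(-r))` at `0`, then `t ^ (a - 1) * g t`
is absolutely integrable for `Re a > r` (`integrableOn_cpow_mul`), and `t ^ a * g t` vanishes at both
ends of `(0, ∞)`. A single integration by parts therefore has no boundary terms and gives
`∫ t ^ (a - 1) * g t = -(1 / a) * ∫ t ^ a * g' t` (`integral_cpow_mul_eq`), where `a ≠ 0` because
`Re a > r ≥ 0`. Applying this to `g = f^(k)` with `a + k` in place of `a`, for `k = 0, …, N - 1`,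
produces the factor `∏ (-1 / (a + k)) = (-1)^N 2^N / ∏ (s + 2k + 1)`.
-/

open Filter Topology

/-- The growth condition imposed on each derivative: exponential decay on `[1, ∞)` and
a bound by a multiple of `t ^ (-r)` on `(0, 1]`. -/
def MellinBound (r : ℝ) (g : ℝ → ℂ) : Prop :=
  ∃ C ε : ℝ, 0 < C ∧ 0 < ε ∧
    (∀ t : ℝ, 1 ≤ t → ‖g t‖ ≤ C * Real.exp (-ε * t)) ∧
    (∀ t : ℝ, 0 < t → t ≤ 1 → ‖g t‖ ≤ C * t ^ (-r))

lemma integrableOn_cpow_mul {r : ℝ} {g : ℝ → ℂ} (hg : ContinuousOn g (Ioi 0))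
    (hb : MellinBound r g) {a : ℂ} (ha : r < a.re) :
    IntegrableOn (fun t : ℝ => (t : ℂ) ^ (a - 1) * g t) (Ioi 0) := by
  obtain ⟨C, ε, -, hε, h1, h0⟩ := hb
  refine mellinConvergent_of_isBigO_rpow_exp hε
    (hg.locallyIntegrableOn measurableSet_Ioi) ?_ ?_ ha
  · refine Asymptotics.IsBigO.of_bound C ?_
    filter_upwards [eventually_ge_atTop 1] with t ht
    rw [Real.norm_of_nonneg (Real.exp_pos _).le]
    exact h1 t ht
  · refine Asymptotics.IsBigO.of_bound C ?_
    filter_upwards [Ioc_mem_nhdsGT (zero_lt_one' ℝ)] with t ht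
    rw [Real.norm_of_nonneg (Real.rpow_nonneg ht.1.le _)]
    exact h0 t ht.1 ht.2

lemma tendsto_cpow_mul_zero {r : ℝ} {g : ℝ → ℂ} (hb : MellinBound r g) {a : ℂ} (ha : r < a.re) :
    Tendsto (fun t : ℝ => (t : ℂ) ^ a * g t) (𝓝[>] 0) (𝓝 0) := by
  obtain ⟨C, ε, -, -, -, h0⟩ := hb
  have hlim : Tendsto (fun t : ℝ => C * t ^ (a.re - r)) (𝓝[>] 0) (𝓝 0) := by
    have := (Real.continuousAt_rpow_const 0 (a.re - r) (Or.inr (sub_pos.2 ha).le)).tendsto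
    rw [Real.zero_rpow (sub_pos.2 ha).ne'] at this
    simpa using (this.mono_left nhdsWithin_le_nhds).const_mul C
  refine squeeze_zero_norm' ?_ hlim
  filter_upwards [Ioc_mem_nhdsGT (zero_lt_one' ℝ)] with t ht
  rw [norm_mul, Complex.norm_cpow_eq_rpow_re_of_pos ht.1, sub_eq_add_neg, Real.rpow_add ht.1,
    mul_left_comm]
  exact mul_le_mul_of_nonneg_left (h0 t ht.1 ht.2) (Real.rpow_nonneg ht.1.le _)

lemma tendsto_cpow_mul_atTop {r : ℝ} {g : ℝ → ℂ} (hb : MellinBound r g) (a : ℂ) :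
    Tendsto (fun t : ℝ => (t : ℂ) ^ a * g t) atTop (𝓝 0) := by
  obtain ⟨C, ε, -, hε, h1, -⟩ := hb
  have hlim : Tendsto (fun t : ℝ => C * (t ^ a.re * Real.exp (-ε * t))) atTop (𝓝 0) := by
    simpa using (tendsto_rpow_mul_exp_neg_mul_atTop_nhds_zero a.re ε hε).const_mul C
  refine squeeze_zero_norm' ?_ hlim
  filter_upwards [eventually_ge_atTop 1] with t ht
  have ht0 : 0 < t := by linarith
  rw [norm_mul, Complex.norm_cpow_eq_rpow_re_of_pos ht0, mul_left_comm]
  exact mul_le_mul_of_nonneg_left (h1 t ht) (Real.rpow_nonneg ht0.le _)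

/-- One integration by parts; the growth conditions make both boundary terms vanish. -/
lemma integral_cpow_mul_eq {r : ℝ} (hr : 0 ≤ r) {g g' : ℝ → ℂ}
    (hd : ∀ t ∈ Ioi (0 : ℝ), HasDerivAt g (g' t) t) (hg' : ContinuousOn g' (Ioi 0))
    (hb : MellinBound r g) (hb' : MellinBound r g') {a : ℂ} (ha : r < a.re) :
    ∫ t in Ioi (0 : ℝ), (t : ℂ) ^ (a - 1) * g t
      = -1 / a * ∫ t in Ioi (0 : ℝ), (t : ℂ) ^ a * g' t := by
  have ha0 : a ≠ 0 := by
    rintro rfl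
    simp only [Complex.zero_re] at ha
    linarith
  have hg : ContinuousOn g (Ioi 0) := fun t ht => (hd t ht).continuousAt.continuousWithinAt
  have hI := integrableOn_cpow_mul hg hb ha
  have hI' : IntegrableOn (fun t : ℝ => (t : ℂ) ^ a * g' t) (Ioi 0) := by
    have := integrableOn_cpow_mul hg' hb' (a := a + 1) (by simp; linarith)
    simpa using this
  have hu : ∀ t ∈ Ioi (0 : ℝ),
      HasDerivAt (fun t : ℝ => (t : ℂ) ^ a) (a * (t : ℂ) ^ (a - 1)) t :=
    fun t ht => hasDerivAt_ofReal_cpow_const (ne_of_gt ht) ha0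
  have key := integral_Ioi_mul_deriv_eq_deriv_mul hu hd hI'
    (by simpa only [IntegrableOn, Pi.mul_def, mul_assoc] using hI.const_mul a)
    (tendsto_cpow_mul_zero hb ha) (tendsto_cpow_mul_atTop hb a)
  simp only [mul_assoc, integral_const_mul] at key
  rw [key]
  field_simp
  ring



/-- Iterated integration by parts for Mellin-type integrals:
if `f : (0,∞) → ℂ` is `N` times continuously differentiable with
`|f⁽ʲ⁾(t)| ≤ C_j e^(-εt)` for `t ≥ 1` and `|f⁽ʲ⁾(t)| ≤ C_j t^(-r)` for
`0 < t ≤ 1` (`0 ≤ j ≤ N`), then for `Re s > 2r - 1` both integrals converge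
absolutely and
`∫₀^∞ t^((s-1)/2) f(t) dt
  = ((-1)^N 2^N / ((s+1)(s+3)⋯(s+2N-1))) ∫₀^∞ t^((s-1)/2+N) f⁽ᴺ⁾(t) dt`. -/
theorem statement6 (N : ℕ) (r : ℝ) (hr : 0 ≤ r) (f : ℝ → ℂ)
    (hf : ContDiffOn ℝ N f (Ioi 0))
    (hbound : ∀ j : ℕ, j ≤ N → ∃ C ε : ℝ, 0 < C ∧ 0 < ε ∧
      (∀ t : ℝ, 1 ≤ t →
        ‖iteratedDerivWithin j f (Ioi 0) t‖ ≤ C * Real.exp (-ε * t)) ∧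
      (∀ t : ℝ, 0 < t → t ≤ 1 →
        ‖iteratedDerivWithin j f (Ioi 0) t‖ ≤ C * t ^ (-r))) :
    ∀ s : ℂ, 2 * r - 1 < s.re →
      IntegrableOn (fun t : ℝ => (t : ℂ) ^ ((s - 1) / 2) * f t) (Ioi 0) ∧
      IntegrableOn
        (fun t : ℝ => (t : ℂ) ^ ((s - 1) / 2 + N) *
          iteratedDerivWithin N f (Ioi 0) t) (Ioi 0) ∧
      ∫ t in Ioi (0 : ℝ), (t : ℂ) ^ ((s - 1) / 2) * f t
        = ((-1) ^ N * 2 ^ N / ∏ j ∈ Finset.range N, (s + 2 * (j : ℂ) + 1)) *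
            ∫ t in Ioi (0 : ℝ), (t : ℂ) ^ ((s - 1) / 2 + N) *
              iteratedDerivWithin N f (Ioi 0) t := by
  intro s hs
  have hre : ∀ k : ℕ, r < ((s + 1) / 2 + k : ℂ).re := by
    intro k
    have h2 : ((s + 1) / 2 + k : ℂ).re = (s.re + 1) / 2 + k := by
      simp
    have : (0 : ℝ) ≤ k := k.cast_nonneg
    rw [h2]
    linarith
  have hexp : ∀ k : ℕ, (s - 1) / 2 + (k : ℂ) = (s + 1) / 2 + k - 1 := fun k => by ring
  have hcont : ∀ k ≤ N, ContinuousOn (iteratedDerivWithin k f (Ioi 0)) (Ioi 0) := fun k hk =>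
    hf.continuousOn_iteratedDerivWithin (by exact_mod_cast hk) (uniqueDiffOn_Ioi 0)
  have hint : ∀ k ≤ N, IntegrableOn (fun t : ℝ => (t : ℂ) ^ ((s - 1) / 2 + k) *
      iteratedDerivWithin k f (Ioi 0) t) (Ioi 0) := by
    intro k hk
    rw [hexp]
    exact integrableOn_cpow_mul (hcont k hk) (hbound k hk) (hre k)
  have heq : ∀ k ≤ N, ∫ t in Ioi (0 : ℝ), (t : ℂ) ^ ((s - 1) / 2) * f t
      = ((-1) ^ k * 2 ^ k / ∏ j ∈ Finset.range k, (s + 2 * (j : ℂ) + 1)) *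
        ∫ t in Ioi (0 : ℝ), (t : ℂ) ^ ((s - 1) / 2 + k) * iteratedDerivWithin k f (Ioi 0) t := by
    intro k
    induction k with
    | zero => intro _; simp
    | succ k ih =>
      intro hk
      have hd : ∀ t ∈ Ioi (0 : ℝ), HasDerivAt (iteratedDerivWithin k f (Ioi 0))
          (iteratedDerivWithin (k + 1) f (Ioi 0) t) t := by
        intro t ht
        have hdiff := hf.differentiableOn_iteratedDerivWithin (m := k)
          (by exact_mod_cast hk) (uniqueDiffOn_Ioi 0)
        rw [iteratedDerivWithin_succ]
        exact (hdiff t ht).hasDerivWithinAt.hasDerivAt (Ioi_mem_nhds ht)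
      have hstep := integral_cpow_mul_eq hr hd (hcont _ hk) (hbound k (by omega))
        (hbound _ hk) (hre k)
      have hexp' : (s - 1) / 2 + ((k + 1 : ℕ) : ℂ) = (s + 1) / 2 + k := by push_cast; ring
      have hfac : (s + 1) / 2 + (k : ℂ) = (s + 2 * k + 1) / 2 := by ring
      rw [ih (by omega), hexp k, hstep, hexp', Finset.prod_range_succ, ← mul_assoc]
      congr 1
      rw [hfac, pow_succ, pow_succ, div_div_eq_mul_div, div_mul_div_comm]
      ring
  refine ⟨?_, hint N le_rfl, heq N le_rfl⟩
  simpa using hint 0 (Nat.zero_le N)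
end

section
/- Let f : (0,∞) → ℂ be smooth and suppose: (1) for every N ∈ ℕ there are C, ε > 0 with |f^{(N)}(t)| ≤ C e^{-εt} for t ≥ 1; (2) for every N ∈ ℕ there are C, r_N ≥ 0 with |f^{(N)}(t)| ≤ C t^{-r_N} for 0 < t ≤ 1; (3) there is p ∈ ℝ such that G(s) := ∫₀^∞ t^{(s-1)/2} f(t) dt converges absolutely for Re s > p; (4) there is a meromorphic function G̃ on ℂ with G̃(s) = G(s) for Re s > p, such that for all real numbers A ≤ B and every N > 0 there exist s₀, C > 0 such that every s with A ≤ Re s ≤ B and |Im s| ≥ s₀ satisfies: G̃ is holomorphic at s and |G̃(s)| ≤ C|s|^{−N}. Then f admits a differentiable asymptotic expansion as t → 0+: there exist a sequence α : ℕ → ℂ with Re α_j → +∞, orders k : ℕ → ℕ, and coefficients a : ℕ → ℕ → ℂ such that for all N, K > 0 there is C with |dⁿ/dtⁿ [f(t) − ∑_{j : Re α_j ≤ N+K} ∑_{i≤k_j} a_{j i} t^{α_j} (log t)^i]|_{n=N} ≤ C t^K for all 0 < t ≤ 1. -/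
/-!
With `M w = G (2 * w - 1)` the hypotheses say that `M` is a meromorphic continuation of the Mellin
transform `∫ t ^ (w - 1) * f t` and is rapidly decreasing on vertical strips. Decay makes `M`
integrable on any vertical line free of singularities, so Mellin inversion gives

  `f t = (1 / 2π) ∫ t ^ (-(c + y * I)) * M (c + y * I) dy`

on a suitable line `re w = c` in the half-plane of convergence.

Every vertical strip contains only finitely many singularities of `M`: they are isolated, and
decay confines them to a compact rectangle. Moving the line of integration to `re w = a` with `a`
far to the left (`contour_shift`) therefore produces finitely many residues. A term
`b i / (w - w₀) ^ (i + 1)` of a principal part contributes `b i * (-log t) ^ i / i! * t ^ (-w₀)`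
(`rectInt_exp_div_pow`), so the exponents of the expansion are the points `-w₀`.

The remainder is the integral over the line `re w = a`. Differentiating `N` times under the
integral sign bounds its `N`-th derivative by a multiple of `t ^ (-a - N)`
(`iteratedDerivWithin_vert_integral_bound`), which is at most `t ^ K` on `(0, 1]` as soon as
`a ≤ -(N + K)`. The line must not sweep up exponents with real part exceeding `N + K`; a line just
to the left of `-(N + K)` does this (`StripDecay.exists_good_line`).
-/

open MeasureTheory Set Filter

section Aux
open Complex intervalIntegral Topology

/-! ### Contour integrals over rectangles -/

/-- Counterclockwise contour integral of `g` over the boundary of the rectangle with lower left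
corner `z` and upper right corner `w`, written exactly as in Mathlib's Cauchy theorem
`Complex.integral_boundary_rect_eq_zero_of_differentiableOn`. -/
noncomputable def rectInt (g : ℂ → ℂ) (z w : ℂ) : ℂ :=
  (∫ x : ℝ in z.re..w.re, g (x + z.im * I)) - (∫ x : ℝ in z.re..w.re, g (x + w.im * I)) +
    I • (∫ y : ℝ in z.im..w.im, g (w.re + y * I)) - I • ∫ y : ℝ in z.im..w.im, g (z.re + y * I)

/-- Boundary of the closed rectangle with lower left corner `z` and upper right corner `w`. -/
def rectBd (z w : ℂ) : Set ℂ :=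
  {u | u.re ∈ Icc z.re w.re ∧ u.im ∈ Icc z.im w.im ∧
    (u.re = z.re ∨ u.re = w.re ∨ u.im = z.im ∨ u.im = w.im)}

lemma mem_rectBd_hor {z w : ℂ} (hi : z.im ≤ w.im) {x : ℝ} (hx : x ∈ Icc z.re w.re) :
    (x + z.im * I : ℂ) ∈ rectBd z w ∧ (x + w.im * I : ℂ) ∈ rectBd z w := by
  simp_all [rectBd]

lemma mem_rectBd_ver {z w : ℂ} (hr : z.re ≤ w.re) {y : ℝ} (hy : y ∈ Icc z.im w.im) :
    (z.re + y * I : ℂ) ∈ rectBd z w ∧ (w.re + y * I : ℂ) ∈ rectBd z w := by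
  simp_all [rectBd]

lemma rect_edges_intervalIntegrable {g : ℂ → ℂ} {z w : ℂ} (hr : z.re ≤ w.re) (hi : z.im ≤ w.im)
    (hg : ContinuousOn g (rectBd z w)) :
    IntervalIntegrable (fun x : ℝ => g (x + z.im * I)) volume z.re w.re ∧
    IntervalIntegrable (fun x : ℝ => g (x + w.im * I)) volume z.re w.re ∧
    IntervalIntegrable (fun y : ℝ => g (w.re + y * I)) volume z.im w.im ∧
    IntervalIntegrable (fun y : ℝ => g (z.re + y * I)) volume z.im w.im := by
  refine ⟨?_, ?_, ?_, ?_⟩ <;> apply ContinuousOn.intervalIntegrable <;>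
    refine hg.comp (by fun_prop) fun x hx => ?_ <;>
    (first | rw [uIcc_of_le hr] at hx | rw [uIcc_of_le hi] at hx)
  · exact (mem_rectBd_hor hi hx).1
  · exact (mem_rectBd_hor hi hx).2
  · exact (mem_rectBd_ver hr hx).2
  · exact (mem_rectBd_ver hr hx).1

lemma rectInt_add {g h : ℂ → ℂ} {z w : ℂ} (hr : z.re ≤ w.re) (hi : z.im ≤ w.im)
    (hg : ContinuousOn g (rectBd z w)) (hh : ContinuousOn h (rectBd z w)) :
    rectInt (fun u => g u + h u) z w = rectInt g z w + rectInt h z w := by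
  obtain ⟨g1, g2, g3, g4⟩ := rect_edges_intervalIntegrable hr hi hg
  obtain ⟨h1, h2, h3, h4⟩ := rect_edges_intervalIntegrable hr hi hh
  simp only [rectInt, integral_add g1 h1, integral_add g2 h2, integral_add g3 h3,
    integral_add g4 h4, smul_eq_mul]
  ring

lemma rectInt_const_mul (c : ℂ) (g : ℂ → ℂ) (z w : ℂ) :
    rectInt (fun u => c * g u) z w = c * rectInt g z w := by
  simp only [rectInt, intervalIntegral.integral_const_mul, smul_eq_mul]
  ring

lemma rectInt_congr {g h : ℂ → ℂ} {z w : ℂ} (hr : z.re ≤ w.re) (hi : z.im ≤ w.im)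
    (he : EqOn g h (rectBd z w)) : rectInt g z w = rectInt h z w := by
  unfold rectInt
  congr 1
  · congr 1
    · congr 1 <;> refine integral_congr fun x hx => he ?_ <;> rw [uIcc_of_le hr] at hx
      · exact (mem_rectBd_hor hi hx).1
      · exact (mem_rectBd_hor hi hx).2
    · congr 1; refine integral_congr fun x hx => he ?_
      rw [uIcc_of_le hi] at hx; exact (mem_rectBd_ver hr hx).2
  · congr 1; refine integral_congr fun x hx => he ?_
    rw [uIcc_of_le hi] at hx; exact (mem_rectBd_ver hr hx).1

lemma rectInt_sum {ι : Type*} (s : Finset ι) {g : ι → ℂ → ℂ} {z w : ℂ} (hr : z.re ≤ w.re)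
    (hi : z.im ≤ w.im) (hg : ∀ i ∈ s, ContinuousOn (g i) (rectBd z w)) :
    rectInt (fun u => ∑ i ∈ s, g i u) z w = ∑ i ∈ s, rectInt (g i) z w := by
  classical
  induction s using Finset.induction_on with
  | empty => simp [rectInt]
  | insert a s ha ih =>
    simp only [Finset.sum_insert ha]
    rw [rectInt_add hr hi (hg a (by simp)) (continuousOn_finsetSum _ fun i h => hg i (by simp [h])),
      ih fun i h => hg i (by simp [h])]

lemma integral_hor_of_hasDerivAt {F g : ℂ → ℂ} {a b c : ℝ}
    (hF : ∀ x ∈ uIcc a b, HasDerivAt F (g (x + c * I)) (x + c * I))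
    (hg : IntervalIntegrable (fun x : ℝ => g (x + c * I)) volume a b) :
    ∫ x : ℝ in a..b, g (x + c * I) = F (b + c * I) - F (a + c * I) := by
  refine integral_eq_sub_of_hasDerivAt (f := fun x : ℝ => F (x + c * I)) (fun x hx => ?_) hg
  exact ((hF x hx).comp_add_const _ _).comp_ofReal

lemma integral_ver_of_hasDerivAt {F g : ℂ → ℂ} {b c d : ℝ}
    (hF : ∀ y ∈ uIcc c d, HasDerivAt F (g (b + y * I)) (b + y * I))
    (hg : IntervalIntegrable (fun y : ℝ => g (b + y * I)) volume c d) :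
    I • ∫ y : ℝ in c..d, g (b + y * I) = F (b + d * I) - F (b + c * I) := by
  rw [smul_eq_mul, ← intervalIntegral.integral_const_mul]
  refine integral_eq_sub_of_hasDerivAt (f := fun y : ℝ => F (b + y * I)) (fun y hy => ?_)
    (hg.const_mul I)
  have h1 : HasDerivAt (fun y : ℂ => (b : ℂ) + y * I) I (y : ℂ) := by
    simpa using ((hasDerivAt_id (y : ℂ)).mul_const I).const_add (b : ℂ)
  have := HasDerivAt.comp (y : ℂ) (hF y hy) h1
  rw [mul_comm]
  exact this.comp_ofReal

/-- The fundamental theorem of calculus along a closed contour. Only the boundary of the rectangle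
matters, so singularities of the primitive inside are allowed. -/
lemma rectInt_deriv_eq_zero {F g : ℂ → ℂ} {z w : ℂ} (hr : z.re ≤ w.re) (hi : z.im ≤ w.im)
    (hF : ∀ u ∈ rectBd z w, HasDerivAt F (g u) u) (hg : ContinuousOn g (rectBd z w)) :
    rectInt g z w = 0 := by
  obtain ⟨g1, g2, g3, g4⟩ := rect_edges_intervalIntegrable hr hi hg
  unfold rectInt
  rw [integral_hor_of_hasDerivAt (F := F) _ g1, integral_hor_of_hasDerivAt (F := F) _ g2,
    integral_ver_of_hasDerivAt (F := F) _ g3, integral_ver_of_hasDerivAt (F := F) _ g4]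
  · ring
  all_goals
    intro x hx
    (first | rw [uIcc_of_le hr] at hx | rw [uIcc_of_le hi] at hx)
    apply hF
  · exact (mem_rectBd_ver hr hx).1
  · exact (mem_rectBd_ver hr hx).2
  · exact (mem_rectBd_hor hi hx).2
  · exact (mem_rectBd_hor hi hx).1

/-- A rectangle winds once around each interior point. The branch `log (u - w₀)` is a primitive of
`(u - w₀)⁻¹` on three edges and `log (-(u - w₀))` on the left edge, which the cut of the former
crosses; each of the two left corners contributes a jump of `π * I`. -/
lemma rectInt_inv_sub {z w w₀ : ℂ} (hr : w₀.re ∈ Ioo z.re w.re) (hi : w₀.im ∈ Ioo z.im w.im) :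
    rectInt (fun u => (u - w₀)⁻¹) z w = 2 * Real.pi * I := by
  obtain ⟨hr1, hr2⟩ := hr
  obtain ⟨hi1, hi2⟩ := hi
  have hne : ∀ u ∈ rectBd z w, u - w₀ ≠ 0 := by
    rintro u ⟨-, -, h⟩ h0
    rw [sub_eq_zero] at h0
    subst h0
    rcases h with h | h | h | h <;> linarith
  have hg : ContinuousOn (fun u => (u - w₀)⁻¹) (rectBd z w) :=
    ContinuousOn.inv₀ (by fun_prop) hne
  obtain ⟨g1, g2, g3, g4⟩ := rect_edges_intervalIntegrable (by linarith) (by linarith) hg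
  have hlog : ∀ u : ℂ, u - w₀ ∈ slitPlane → HasDerivAt (fun u => log (u - w₀)) (u - w₀)⁻¹ u := by
    intro u hu
    simpa using ((hasDerivAt_id u).sub_const w₀).clog hu
  have hlog' : ∀ u : ℂ, -(u - w₀) ∈ slitPlane →
      HasDerivAt (fun u => log (-(u - w₀))) (u - w₀)⁻¹ u := by
    intro u hu
    have := ((hasDerivAt_id u).sub_const w₀).neg.clog hu
    refine this.congr_deriv ?_
    change -1 / -(u - w₀) = (u - w₀)⁻¹
    rw [neg_div_neg_eq, one_div]
  simp only [rectInt]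
  rw [integral_hor_of_hasDerivAt (F := fun u => log (u - w₀)) (g := fun u => (u - w₀)⁻¹) _ g1,
    integral_hor_of_hasDerivAt (F := fun u => log (u - w₀)) (g := fun u => (u - w₀)⁻¹) _ g2,
    integral_ver_of_hasDerivAt (F := fun u => log (u - w₀)) (g := fun u => (u - w₀)⁻¹) _ g3,
    integral_ver_of_hasDerivAt (F := fun u => log (-(u - w₀))) (g := fun u => (u - w₀)⁻¹) _ g4]
  · have e1 : log (z.re + w.im * I - w₀) - log (-(z.re + w.im * I - w₀)) = Real.pi * I := by
      rw [log, log, norm_neg, arg_neg_eq_arg_sub_pi_of_im_pos (by simpa using hi2)]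
      push_cast; ring
    have e2 : log (-(z.re + z.im * I - w₀)) - log (z.re + z.im * I - w₀) = Real.pi * I := by
      rw [log, log, norm_neg, arg_neg_eq_arg_add_pi_of_im_neg (by simpa using hi1)]
      push_cast; ring
    linear_combination e1 + e2
  · intro y _; apply hlog'; left; simpa using hr1
  · intro y _; apply hlog; left; simpa using hr2
  · intro x _; apply hlog; right; simpa using (sub_pos.2 hi2).ne'
  · intro x _; apply hlog; right; simpa using (sub_neg.2 hi1).ne

lemma rectInt_eq_zero_of_differentiableOn {g : ℂ → ℂ} {z w : ℂ}
    (hg : DifferentiableOn ℂ g (uIcc z.re w.re ×ℂ uIcc z.im w.im)) : rectInt g z w = 0 :=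
  integral_boundary_rect_eq_zero_of_differentiableOn g z w hg

/-- Residue of `exp (-L * u) / (u - w₀) ^ (m + 1)`. The case `m = 0` splits off `exp (-L * w₀)` and
leaves an entire divided difference; the induction step is the vanishing of the contour integral of
the derivative of `exp (-L * u) / (u - w₀) ^ (m + 1)`. -/
lemma rectInt_exp_div_pow {z w w₀ : ℂ} (hr : w₀.re ∈ Ioo z.re w.re) (hi : w₀.im ∈ Ioo z.im w.im)
    (L : ℂ) (m : ℕ) :
    rectInt (fun u => exp (-L * u) * ((u - w₀) ^ (m + 1))⁻¹) z w =
      2 * Real.pi * I * ((-L) ^ m / m.factorial * exp (-L * w₀)) := by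
  have hr' : z.re ≤ w.re := (hr.1.trans hr.2).le
  have hi' : z.im ≤ w.im := (hi.1.trans hi.2).le
  have hne : ∀ u ∈ rectBd z w, u - w₀ ≠ 0 := by
    rintro u ⟨-, -, h⟩ h0
    rw [sub_eq_zero] at h0
    subst h0
    obtain ⟨hr1, hr2⟩ := hr
    obtain ⟨hi1, hi2⟩ := hi
    rcases h with h | h | h | h <;> linarith
  have hc : ∀ m : ℕ, ContinuousOn (fun u => exp (-L * u) * ((u - w₀) ^ (m + 1))⁻¹) (rectBd z w) := by
    intro m
    refine ContinuousOn.mul (by fun_prop) (ContinuousOn.inv₀ (by fun_prop) fun u hu => ?_)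
    exact pow_ne_zero _ (hne u hu)
  induction m with
  | zero =>
    have hd : Differentiable ℂ (fun u => exp (-L * u)) := by fun_prop
    have hds : Differentiable ℂ (dslope (fun u => exp (-L * u)) w₀) := by
      rw [← differentiableOn_univ, differentiableOn_dslope univ_mem]
      exact hd.differentiableOn
    rw [rectInt_congr (h := fun u => exp (-L * w₀) * (u - w₀)⁻¹ +
      dslope (fun u => exp (-L * u)) w₀ u) hr' hi']
    · rw [rectInt_add hr' hi' _ hds.continuous.continuousOn, rectInt_const_mul,
        rectInt_inv_sub hr hi, rectInt_eq_zero_of_differentiableOn hds.differentiableOn]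
      · simp; ring
      · exact continuousOn_const.mul (ContinuousOn.inv₀ (by fun_prop) hne)
    · intro u hu
      have := hne u hu
      simp only [dslope_of_ne _ (sub_ne_zero.1 this), slope_def_field]
      field_simp
      ring
  | succ m ih =>
    have key : rectInt (fun u => -L * (exp (-L * u) * ((u - w₀) ^ (m + 1))⁻¹) +
        -(m + 1) * (exp (-L * u) * ((u - w₀) ^ (m + 1 + 1))⁻¹)) z w = 0 := by
      refine rectInt_deriv_eq_zero (F := fun u => exp (-L * u) * ((u - w₀) ^ (m + 1))⁻¹) hr' hi'
        (fun u hu => ?_) ((continuousOn_const.mul (hc m)).add (continuousOn_const.mul (hc (m + 1))))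
      have h0 := hne u hu
      have h1 : HasDerivAt (fun u => exp (-L * u)) (exp (-L * u) * (-L)) u := by
        simpa using ((hasDerivAt_id u).const_mul (-L)).cexp
      have h2 : HasDerivAt (fun u => (u - w₀) ^ (m + 1)) ((m + 1) * (u - w₀) ^ m) u := by
        simpa using ((hasDerivAt_id' u).sub_const w₀).fun_pow (m + 1)
      have h3 : HasDerivAt (fun u => ((u - w₀) ^ (m + 1))⁻¹)
          (-(m + 1) * ((u - w₀) ^ (m + 1 + 1))⁻¹) u :=
        (h2.inv (pow_ne_zero _ h0)).congr_deriv (by field_simp; ring)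
      exact (h1.fun_mul h3).congr_deriv (by ring)
    rw [rectInt_add (g := fun u => -L * (exp (-L * u) * ((u - w₀) ^ (m + 1))⁻¹))
      (h := fun u => -(m + 1) * (exp (-L * u) * ((u - w₀) ^ (m + 1 + 1))⁻¹)) hr' hi'
      (continuousOn_const.mul (hc m)) (continuousOn_const.mul (hc (m + 1))),
      rectInt_const_mul, rectInt_const_mul, ih] at key
    have hm : (m + 1 : ℂ) ≠ 0 := by exact_mod_cast Nat.succ_ne_zero m
    have hm' : (m.factorial : ℂ) ≠ 0 := by exact_mod_cast m.factorial_ne_zero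
    apply mul_left_cancel₀ hm
    rw [Nat.factorial_succ]
    push_cast
    field_simp
    field_simp at key
    linear_combination -key

/-! ### Differentiation of vertical line integrals -/

lemma hasDerivAt_ofReal_cpow_pos {x : ℝ} (hx : 0 < x) (r : ℂ) :
    HasDerivAt (fun y : ℝ => (y : ℂ) ^ r) (r * (x : ℂ) ^ (r - 1)) x := by
  rcases eq_or_ne r 0 with rfl | hr
  · simpa using hasDerivAt_const x (1 : ℂ)
  · exact hasDerivAt_ofReal_cpow_const hx.ne' hr

lemma continuous_vert_cpow {t : ℝ} (ht : 0 < t) (c : ℝ) :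
    Continuous fun y : ℝ => (t : ℂ) ^ (-(c + y * I)) :=
  Continuous.const_cpow (by fun_prop) (Or.inl (by exact_mod_cast ht.ne'))

lemma norm_vert_cpow {t : ℝ} (ht : 0 < t) (c y : ℝ) :
    ‖(t : ℂ) ^ (-(c + y * I))‖ = t ^ (-c) := by
  rw [norm_cpow_eq_rpow_re_of_pos ht]; simp

lemma integrable_vert {g : ℝ → ℂ} (hg : Integrable g) {t : ℝ} (ht : 0 < t) (c : ℝ) :
    Integrable fun y : ℝ => (t : ℂ) ^ (-(c + y * I)) * g y :=
  hg.bdd_mul (c := t ^ (-c)) (continuous_vert_cpow ht c).aestronglyMeasurable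
    (Eventually.of_forall fun y => (norm_vert_cpow ht c y).le)

lemma hasDerivAt_vert_integral {g : ℝ → ℂ} (hg : Integrable g) (c : ℝ)
    (hg1 : Integrable fun y : ℝ => -(c + y * I) * g y) {t : ℝ} (ht : 0 < t) :
    HasDerivAt (fun t : ℝ => ∫ y : ℝ, (t : ℂ) ^ (-(c + y * I)) * g y)
      (∫ y : ℝ, (t : ℂ) ^ (-(((c + 1 : ℝ) : ℂ) + y * I)) * (-(c + y * I) * g y)) t := by
  -- On a compact neighbourhood of `t` the kernel `x ^ (-(c + 1))` is bounded, which gives domination.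
  have hsub : ∀ x ∈ Icc (t / 2) (2 * t), 0 < x := fun x hx => by have := hx.1; linarith
  obtain ⟨D, hD⟩ := (isCompact_Icc (a := t / 2) (b := 2 * t)).exists_bound_of_continuousOn
    (f := fun x : ℝ => x ^ (-(c + 1)))
    (fun x hx => (Real.continuousAt_rpow_const _ _ (Or.inl (hsub x hx).ne')).continuousWithinAt)
  refine (hasDerivAt_integral_of_dominated_loc_of_deriv_le (s := Icc (t / 2) (2 * t))
    (bound := fun y => D * ‖-(c + y * I) * g y‖)
    (F' := fun (t : ℝ) (y : ℝ) => (t : ℂ) ^ (-(((c + 1 : ℝ) : ℂ) + y * I)) * (-(c + y * I) * g y))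
    (Icc_mem_nhds (by linarith) (by linarith)) ?_ (integrable_vert hg ht c)
    (integrable_vert hg1 ht (c + 1)).aestronglyMeasurable ?_ (hg1.norm.const_mul D) ?_).2
  · filter_upwards [lt_mem_nhds ht] with x hx using (integrable_vert hg hx c).aestronglyMeasurable
  · refine Eventually.of_forall fun y x hx => ?_
    rw [norm_mul, norm_vert_cpow (hsub x hx)]
    gcongr
    exact (le_abs_self _).trans (hD x hx)
  · refine Eventually.of_forall fun y x hx => ?_
    refine ((hasDerivAt_ofReal_cpow_pos (hsub x hx) (-(c + y * I))).mul_const (g y)).congr_deriv ?_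
    rw [show (-(c + y * I) - 1 : ℂ) = -(((c + 1 : ℝ) : ℂ) + y * I) by push_cast; ring]
    ring

lemma integrable_pow_mul_succ {g : ℝ → ℂ} (hg : ∀ n : ℕ, Integrable fun y : ℝ => (y : ℂ) ^ n * g y)
    (c : ℝ) (n : ℕ) : Integrable fun y : ℝ => (y : ℂ) ^ n * (-(c + y * I) * g y) := by
  refine (((hg n).const_mul (-c : ℂ)).add ((hg (n + 1)).const_mul (-I))).congr
    (Eventually.of_forall fun y => ?_)
  simp only [Pi.add_apply]
  ring

/-- Each derivative of the line integral `∫ t ^ (-(c + y * I)) * g y` multiplies the density by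
`-(c + y * I)` and moves the line from `c` to `c + 1`, hence costs one power of `t`. All moments of
`g` are assumed integrable so that the induction can be iterated. -/
lemma iteratedDerivWithin_vert_integral_bound (N : ℕ) : ∀ (g : ℝ → ℂ) (c : ℝ)
    (_ : ∀ n : ℕ, Integrable fun y : ℝ => (y : ℂ) ^ n * g y),
    ∃ C : ℝ, ∀ t : ℝ, 0 < t →
      ‖iteratedDerivWithin N (fun t : ℝ => ∫ y : ℝ, (t : ℂ) ^ (-(c + y * I)) * g y) (Ioi 0) t‖
        ≤ C * t ^ (-c - N) := by
  induction N with
  | zero =>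
    intro g c hg
    refine ⟨∫ y, ‖g y‖, fun t ht => ?_⟩
    rw [iteratedDerivWithin_zero]
    refine (MeasureTheory.norm_integral_le_integral_norm _).trans_eq ?_
    simp_rw [norm_mul, norm_vert_cpow ht, MeasureTheory.integral_const_mul]
    simp [mul_comm]
  | succ N ih =>
    intro g c hg
    have hg' := integrable_pow_mul_succ hg c
    obtain ⟨C, hC⟩ := ih (fun y => -(c + y * I) * g y) (c + 1) hg'
    refine ⟨C, fun t ht => ?_⟩
    have hcongr : EqOn (derivWithin (fun t : ℝ => ∫ y : ℝ, (t : ℂ) ^ (-(c + y * I)) * g y) (Ioi 0))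
        (fun t : ℝ => ∫ y : ℝ, (t : ℂ) ^ (-(((c + 1 : ℝ) : ℂ) + y * I)) * (-(c + y * I) * g y))
        (Ioi 0) := fun x hx => ((hasDerivAt_vert_integral (by simpa using hg 0) c (by simpa using hg' 0)
        hx).hasDerivWithinAt).derivWithin (uniqueDiffOn_Ioi 0 x hx)
    rw [iteratedDerivWithin_succ', iteratedDerivWithin_congr hcongr ht]
    convert hC t ht using 3
    push_cast; ring

/-! ### Principal parts and removable singularities -/

/-- Principal part of a function `g` for which `(z - w₀) ^ n * g z` extends analytically to `w₀`:
the coefficients are peeled off one at a time, the divided difference `dslope` being analytic. -/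
lemma exists_principalPart_aux (w₀ : ℂ) (n : ℕ) : ∀ g : ℂ → ℂ,
    (∃ F : ℂ → ℂ, AnalyticAt ℂ F w₀ ∧ ∀ᶠ z in 𝓝[≠] w₀, (z - w₀) ^ n * g z = F z) →
    ∃ (b : ℕ → ℂ) (h : ℂ → ℂ), AnalyticAt ℂ h w₀ ∧
      ∀ᶠ z in 𝓝[≠] w₀, g z = (∑ i ∈ Finset.range n, b i * ((z - w₀) ^ (i + 1))⁻¹) + h z := by
  induction n with
  | zero =>
    rintro g ⟨F, hF, h⟩
    exact ⟨0, F, hF, by simpa using h⟩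
  | succ n ih =>
    rintro g ⟨F, hF, h⟩
    obtain ⟨q, hq⟩ := hF
    obtain ⟨b, k, hk, hb⟩ := ih (fun z => g z - F w₀ * ((z - w₀) ^ (n + 1))⁻¹)
      ⟨dslope F w₀, hq.has_fpower_series_dslope_fslope.analyticAt, by
        filter_upwards [h, self_mem_nhdsWithin] with z hz hne
        have : z - w₀ ≠ 0 := sub_ne_zero.2 hne
        rw [dslope_of_ne _ hne, slope_def_field, ← hz]
        field_simp
        ring⟩
    refine ⟨fun i => if i = n then F w₀ else b i, k, hk, ?_⟩
    filter_upwards [hb] with z hz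
    rw [Finset.sum_range_succ, Finset.sum_congr rfl (g := fun i => b i * ((z - w₀) ^ (i + 1))⁻¹)]
    · simp only [if_true]
      linear_combination hz
    · intro i hi
      rw [if_neg (Finset.mem_range.1 hi).ne]

/-- The number of terms is written `k + 1`, one more than needed, to match index sets of the form
`Finset.range (k + 1)`. -/
lemma exists_principalPart {g : ℂ → ℂ} {w₀ : ℂ} (hg : MeromorphicAt g w₀) :
    ∃ (k : ℕ) (b : ℕ → ℂ) (h : ℂ → ℂ), AnalyticAt ℂ h w₀ ∧
      ∀ᶠ z in 𝓝[≠] w₀, g z = (∑ i ∈ Finset.range (k + 1), b i * ((z - w₀) ^ (i + 1))⁻¹) + h z := by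
  obtain ⟨n, hn⟩ := hg
  refine ⟨n, exists_principalPart_aux w₀ (n + 1) g
    ⟨fun z => (z - w₀) * ((z - w₀) ^ n • g z), AnalyticAt.mul (by fun_prop) hn,
      Eventually.of_forall fun z => ?_⟩⟩
  simp only [smul_eq_mul]
  ring

/-- A function agreeing with an analytic function on a punctured neighbourhood of every point of `U`
becomes holomorphic on `U` once each value is replaced by the limit there. The values of `g` at the
singular points carry no information: a meromorphic function takes arbitrary values at its
poles. -/
lemma exists_differentiableOn_of_removable {g : ℂ → ℂ} {U : Set ℂ}
    (hg : ∀ z ∈ U, ∃ h : ℂ → ℂ, AnalyticAt ℂ h z ∧ ∀ᶠ u in 𝓝[≠] z, g u = h u) :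
    ∃ g' : ℂ → ℂ, DifferentiableOn ℂ g' U ∧ ∀ z ∈ U, ContinuousAt g z → g z = g' z := by
  refine ⟨fun z => limUnder (𝓝[≠] z) g, fun z hz => ?_, fun z hz hc => ?_⟩
  · obtain ⟨h, hh, he⟩ := hg z hz
    refine (hh.differentiableAt.congr_of_eventuallyEq ?_).differentiableWithinAt
    have h1 : ∀ᶠ u in 𝓝 z, AnalyticAt ℂ h u ∧ ∀ᶠ v in 𝓝[≠] u, g v = h v := by
      refine hh.eventually_analyticAt.and ?_
      rw [eventually_nhdsWithin_iff, ← eventually_eventually_nhds] at he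
      filter_upwards [he] with u hu
      by_cases huz : u = z
      · subst huz; exact eventually_nhdsWithin_iff.2 hu
      · filter_upwards [nhdsWithin_le_nhds hu, nhdsWithin_le_nhds (isOpen_ne.mem_nhds huz)]
          with v hv hvz using hv hvz
    filter_upwards [h1] with u hu
    refine Tendsto.limUnder_eq ?_
    exact (hu.1.continuousAt.tendsto.mono_left nhdsWithin_le_nhds).congr' (by
      filter_upwards [hu.2] with v hv using hv.symm)
  · exact (Tendsto.limUnder_eq (hc.tendsto.mono_left nhdsWithin_le_nhds)).symm

/-! ### Rapid decay on strips and contour shifting -/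

/-- The non-analytic points of a meromorphic function are isolated, so a compact rectangle contains
only finitely many of them. -/
lemma finite_not_analyticAt_strip {M : ℂ → ℂ} (hM : ∀ w, MeromorphicAt M w) {A B T : ℝ}
    (hT : ∀ w : ℂ, A ≤ w.re → w.re ≤ B → T ≤ |w.im| → AnalyticAt ℂ M w) :
    {w : ℂ | ¬ AnalyticAt ℂ M w ∧ A ≤ w.re ∧ w.re ≤ B}.Finite := by
  by_contra hinf
  obtain ⟨x, -, hx⟩ := Set.Infinite.exists_accPt_of_subset_isCompact hinf
    (isCompact_Icc.reProdIm isCompact_Icc : IsCompact (Icc A B ×ℂ Icc (-T) T)) (by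
      rintro w ⟨hw, h1, h2⟩
      refine ⟨⟨h1, h2⟩, ?_⟩
      by_contra h3
      refine hw (hT w h1 h2 ?_)
      by_contra h4
      exact h3 (abs_le.1 (not_le.1 h4).le))
  rw [accPt_iff_frequently_nhdsNE] at hx
  exact hx ((hM x).eventually_analyticAt.mono fun y hy h => h.1 hy)

/-- On every vertical strip `A ≤ re w ≤ B`, `M` is analytic and decays faster than any power of
`|im w|` once `|im w|` is large. The threshold may depend on the strip and on the power. -/
def StripDecay (M : ℂ → ℂ) : Prop :=
  ∀ A B : ℝ, ∀ N : ℕ, ∃ T C : ℝ, 0 < T ∧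
    ∀ w : ℂ, A ≤ w.re → w.re ≤ B → T ≤ |w.im| → AnalyticAt ℂ M w ∧ ‖M w‖ * |w.im| ^ N ≤ C

lemma StripDecay.finite {M : ℂ → ℂ} (h : StripDecay M) (hM : ∀ w, MeromorphicAt M w) (A B : ℝ) :
    {w : ℂ | ¬ AnalyticAt ℂ M w ∧ A ≤ w.re ∧ w.re ≤ B}.Finite := by
  obtain ⟨T, C, -, hT⟩ := h A B 0
  exact finite_not_analyticAt_strip hM fun w h1 h2 h3 => (hT w h1 h2 h3).1

/-- Arbitrarily close to `R` on the left there is a vertical line such that neither it nor the open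
strip between it and `re w = R` contains a non-analytic point. -/
lemma StripDecay.exists_good_line {M : ℂ → ℂ} (h : StripDecay M) (hM : ∀ w, MeromorphicAt M w)
    {A R : ℝ} (hAR : A < R) :
    ∃ c, A < c ∧ c < R ∧ ∀ w : ℂ, c ≤ w.re → w.re < R → AnalyticAt ℂ M w := by
  have hfin := h.finite hM A R
  have : ∀ᶠ c in 𝓝[<] R, ∀ w ∈ {w : ℂ | ¬ AnalyticAt ℂ M w ∧ A ≤ w.re ∧ w.re ≤ R},
      w.re < R → w.re < c := by
    rw [eventually_all_finite hfin]
    intro w _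
    by_cases hw : w.re < R
    · filter_upwards [nhdsWithin_le_nhds (lt_mem_nhds hw)] with c hc using fun _ => hc
    · exact Eventually.of_forall fun c h => absurd h hw
  have hA : ∀ᶠ c in 𝓝[<] R, A < c := nhdsWithin_le_nhds (lt_mem_nhds hAR)
  obtain ⟨c, h1, h2, h3⟩ := (this.and (hA.and self_mem_nhdsWithin)).exists
  refine ⟨c, h2, h3, fun w hw hwR => ?_⟩
  by_contra hbad
  exact absurd (h1 w ⟨hbad, h2.le.trans hw, hwR.le⟩ hwR) (not_lt.2 hw)

lemma StripDecay.integrable_line {M : ℂ → ℂ} (h : StripDecay M) {c : ℝ}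
    (hc : ∀ w : ℂ, w.re = c → AnalyticAt ℂ M w) (n : ℕ) :
    Integrable fun y : ℝ => (y : ℂ) ^ n * M (c + y * I) := by
  have hcont : Continuous fun y : ℝ => M (c + y * I) := by
    rw [continuous_iff_continuousAt]
    intro y
    exact ContinuousAt.comp (f := fun y : ℝ => (c + y * I : ℂ)) (hc _ (by simp)).continuousAt
      (by fun_prop)
  have hcont' : ∀ n : ℕ, Continuous fun y : ℝ => (y : ℂ) ^ n * M (c + y * I) := fun n =>
    (by fun_prop : Continuous fun y : ℝ => (y : ℂ) ^ n).mul hcont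
  -- The integrand is compared with `1 / (1 + y ^ 2)`: by compactness for `|y| ≤ T`, and for larger
  -- `|y|` by decay of orders `n` and `n + 2`.
  obtain ⟨T₁, C₁, -, h₁⟩ := h c c n
  obtain ⟨T₂, C₂, -, h₂⟩ := h c c (n + 2)
  set T := max T₁ T₂
  obtain ⟨D, hD⟩ := (isCompact_Icc (a := -T) (b := T)).exists_bound_of_continuousOn
    (f := fun y : ℝ => (1 + y ^ 2 : ℂ) * ((y : ℂ) ^ n * M (c + y * I)))
    (by
      refine Continuous.continuousOn ?_
      exact (by fun_prop : Continuous fun y : ℝ => (1 + y ^ 2 : ℂ)).mul (hcont' n))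
  refine (integrable_inv_one_add_sq.const_mul (max D (C₁ + C₂))).mono'
    (hcont' n).aestronglyMeasurable (Eventually.of_forall fun y => ?_)
  have hpos : (0 : ℝ) < 1 + y ^ 2 := by positivity
  have hnorm : ‖(1 + y ^ 2 : ℂ)‖ = 1 + y ^ 2 := by
    rw [← abs_of_pos hpos, ← Real.norm_eq_abs, ← norm_real]; push_cast; rfl
  rw [← div_eq_mul_inv, le_div_iff₀ hpos, mul_comm, ← hnorm, ← norm_mul]
  by_cases hy : y ∈ Icc (-T) T
  · exact (hD y hy).trans (le_max_left _ _)
  · have hy' : T ≤ |y| := by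
      by_contra h4
      exact hy (abs_le.1 (not_le.1 h4).le)
    refine le_trans ?_ (le_max_right _ _)
    have e1 := (h₁ (c + y * I) (by simp) (by simp) (by simpa using (le_max_left _ _).trans hy')).2
    have e2 := (h₂ (c + y * I) (by simp) (by simp) (by simpa using (le_max_right _ _).trans hy')).2
    simp only [add_im, ofReal_im, mul_im, ofReal_re, I_im, I_re, mul_one, mul_zero, add_zero,
      zero_add] at e1 e2
    rw [norm_mul, norm_mul, hnorm, norm_pow, norm_real, Real.norm_eq_abs, ← sq_abs y]
    calc _ = ‖M (c + y * I)‖ * |y| ^ n + ‖M (c + y * I)‖ * |y| ^ (n + 2) := by ring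
      _ ≤ _ := add_le_add e1 e2

lemma analyticAt_inv_pow {u w : ℂ} (h : u ≠ w) (i : ℕ) :
    AnalyticAt ℂ (fun z => ((z - w) ^ (i + 1))⁻¹) u :=
  AnalyticAt.inv (by fun_prop) (pow_ne_zero _ (sub_ne_zero.2 h))

/-- The residue theorem for `exp (-L * u) * M u` on a rectangle, in terms of the coefficients `b` of
the principal parts of `M` at the points of `S`. The set `S` may also contain points where `M` has
a removable discontinuity; their coefficients vanish. -/
lemma rectInt_exp_mul_meromorphic {M : ℂ → ℂ} {z w : ℂ} (hr : z.re < w.re) (hi : z.im < w.im)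
    (S : Finset ℂ) (hS : ∀ u ∈ S, u.re ∈ Ioo z.re w.re ∧ u.im ∈ Ioo z.im w.im)
    (hM : ∀ u : ℂ, u.re ∈ Icc z.re w.re → u.im ∈ Icc z.im w.im → u ∉ S → AnalyticAt ℂ M u)
    (k : ℂ → ℕ) (b : ℂ → ℕ → ℂ)
    (hb : ∀ u ∈ S, ∃ h : ℂ → ℂ, AnalyticAt ℂ h u ∧ ∀ᶠ v in 𝓝[≠] u,
      M v = (∑ i ∈ Finset.range (k u + 1), b u i * ((v - u) ^ (i + 1))⁻¹) + h v) (L : ℂ) :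
    rectInt (fun u => exp (-L * u) * M u) z w = 2 * Real.pi * I *
      ∑ u ∈ S, ∑ i ∈ Finset.range (k u + 1), b u i * ((-L) ^ i / i.factorial * exp (-L * u)) := by
  classical
  set P : ℂ → ℂ → ℂ := fun u v => ∑ i ∈ Finset.range (k u + 1), b u i * ((v - u) ^ (i + 1))⁻¹
    with hP
  have hPan : ∀ u v : ℂ, v ≠ u → AnalyticAt ℂ (P u) v := fun u v hvu =>
    Finset.analyticAt_fun_sum _ fun i _ => analyticAt_const.mul (analyticAt_inv_pow hvu i)
  have hbdS : ∀ u ∈ rectBd z w, u ∉ S := by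
    rintro u ⟨-, -, h⟩ huS
    obtain ⟨⟨h1, h2⟩, h3, h4⟩ := hS u huS
    rcases h with h | h | h | h <;> linarith
  have hne : ∀ u ∈ rectBd z w, ∀ v ∈ S, u ≠ v := fun u hu v hv h => hbdS u hu (h ▸ hv)
  have hMbd : ∀ u ∈ rectBd z w, AnalyticAt ℂ M u := fun u hu => hM u hu.1 hu.2.1 (hbdS u hu)
  -- Subtracting all the principal parts leaves a function that is holomorphic on the rectangle after
  -- correcting its values on `S`.
  obtain ⟨H, hHd, hHeq⟩ := exists_differentiableOn_of_removable
    (g := fun u => M u - ∑ v ∈ S, P v u) (U := uIcc z.re w.re ×ℂ uIcc z.im w.im) (by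
      rintro u ⟨hur, hui⟩
      rw [mem_preimage, uIcc_of_le hr.le] at hur
      rw [mem_preimage, uIcc_of_le hi.le] at hui
      by_cases huS : u ∈ S
      · obtain ⟨h, hh, he⟩ := hb u huS
        refine ⟨fun v => h v - ∑ x ∈ S.erase u, P x v, hh.fun_sub
          (Finset.analyticAt_fun_sum _ fun x hx => hPan x u (Finset.ne_of_mem_erase hx).symm), ?_⟩
        filter_upwards [he] with v hv
        rw [hv, ← Finset.add_sum_erase S _ huS]
        ring
      · exact ⟨_, (hM u hur hui huS).fun_sub (Finset.analyticAt_fun_sum _ fun x hx =>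
          hPan x u fun h => huS (h ▸ hx)), Eventually.of_forall fun _ => rfl⟩)
  have hsub : rectBd z w ⊆ uIcc z.re w.re ×ℂ uIcc z.im w.im := by
    rintro u ⟨h1, h2, -⟩
    refine ⟨?_, ?_⟩
    · rwa [mem_preimage, uIcc_of_le hr.le]
    · rwa [mem_preimage, uIcc_of_le hi.le]
  have hexp : Differentiable ℂ fun u => exp (-L * u) := by fun_prop
  have hcE : ∀ v ∈ S, ∀ i : ℕ,
      ContinuousOn (fun u => b v i * (exp (-L * u) * ((u - v) ^ (i + 1))⁻¹)) (rectBd z w) :=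
    fun v hv i u hu => (continuousAt_const.mul (hexp.continuous.continuousAt.mul
      (analyticAt_inv_pow (hne u hu v hv) i).continuousAt)).continuousWithinAt
  rw [rectInt_congr (h := fun u => exp (-L * u) * H u + ∑ v ∈ S, ∑ i ∈ Finset.range (k v + 1),
    b v i * (exp (-L * u) * ((u - v) ^ (i + 1))⁻¹)) hr.le hi.le]
  · rw [rectInt_add (g := fun u => exp (-L * u) * H u) hr.le hi.le
      (hexp.continuous.continuousOn.mul (hHd.continuousOn.mono hsub))
      (continuousOn_finsetSum _ fun v hv => continuousOn_finsetSum _ fun i _ => hcE v hv i),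
      rectInt_eq_zero_of_differentiableOn (g := fun u => exp (-L * u) * H u)
        (hexp.differentiableOn.mul hHd), zero_add,
      rectInt_sum S hr.le hi.le (fun v hv => continuousOn_finsetSum _ fun i _ => hcE v hv i),
      Finset.mul_sum]
    refine Finset.sum_congr rfl fun v hv => ?_
    rw [rectInt_sum _ hr.le hi.le (fun i _ => hcE v hv i), Finset.mul_sum]
    refine Finset.sum_congr rfl fun i _ => ?_
    rw [rectInt_const_mul, rectInt_exp_div_pow (hS v hv).1 (hS v hv).2]
    ring
  · intro u hu
    have hc : ContinuousAt (fun u => M u - ∑ v ∈ S, P v u) u :=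
      ((hMbd u hu).fun_sub (Finset.analyticAt_fun_sum _ fun x hx =>
        hPan x u (hne u hu x hx))).continuousAt
    have e := hHeq u (hsub hu) hc
    simp only [hP] at e
    simp only [← e, mul_sub, Finset.mul_sum]
    rw [eq_comm, sub_add_eq_add_sub, sub_eq_iff_eq_add]
    congr 1
    refine Finset.sum_congr rfl fun v _ => Finset.sum_congr rfl fun i _ => ?_
    ring

/-- The horizontal edges of the rectangles disappear in the limit; `σ = 1` is the upper edge and
`σ = -1` the lower one. -/
lemma tendsto_horizontal {M : ℂ → ℂ} (h : StripDecay M) {a c : ℝ} (hac : a ≤ c) (L σ : ℝ)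
    (hσ : |σ| = 1) :
    Tendsto (fun T : ℝ => ∫ x : ℝ in a..c, exp (-L * (x + (σ * T : ℝ) * I)) *
      M (x + (σ * T : ℝ) * I)) atTop (𝓝 0) := by
  obtain ⟨T₀, C, hT₀, hC⟩ := h a c 1
  have hlim : Tendsto (fun T : ℝ => Real.exp (|L| * (|a| + |c|)) * (C / T) * |c - a|)
      atTop (𝓝 0) := by
    have := ((tendsto_const_nhds (x := C)).div_atTop tendsto_id).const_mul
      (Real.exp (|L| * (|a| + |c|)))
    simpa using this.mul_const |c - a|
  refine squeeze_zero_norm' ?_ hlim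
  filter_upwards [eventually_ge_atTop T₀] with T hT
  have hTpos : 0 < T := hT₀.trans_le hT
  refine norm_integral_le_of_norm_le_const fun x hx => ?_
  rw [uIoc_of_le hac] at hx
  have e := (hC (x + (σ * T : ℝ) * I) (by simpa using hx.1.le) (by simpa using hx.2)
    (by simpa [abs_mul, hσ, abs_of_pos hTpos] using hT)).2
  have him : |(x + (σ * T : ℝ) * I : ℂ).im| = T := by
    simp [abs_mul, hσ, abs_of_pos hTpos]
  rw [him, pow_one] at e
  rw [norm_mul, norm_exp]
  have hre : (-L * (x + (σ * T : ℝ) * I) : ℂ).re = -L * x := by simp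
  rw [hre]
  have hx' : |x| ≤ |a| + |c| := by
    have h1 := hx.1
    have h2 := hx.2
    rw [abs_le]
    constructor
    · linarith [neg_abs_le a, abs_nonneg c]
    · linarith [le_abs_self c, abs_nonneg a]
  have hexp : -L * x ≤ |L| * (|a| + |c|) :=
    calc -L * x ≤ |-L * x| := le_abs_self _
      _ = |L| * |x| := by rw [abs_mul, abs_neg]
      _ ≤ _ := by gcongr
  exact mul_le_mul (Real.exp_le_exp.2 hexp) (by rwa [le_div_iff₀ hTpos]) (norm_nonneg _)
    (Real.exp_pos _).le

lemma integrable_exp_line {M : ℂ → ℂ} (h : StripDecay M) {c : ℝ}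
    (hc : ∀ w : ℂ, w.re = c → AnalyticAt ℂ M w) (L : ℝ) :
    Integrable fun y : ℝ => exp (-L * (c + y * I)) * M (c + y * I) := by
  have : Integrable fun y : ℝ => M (c + y * I) := by simpa using h.integrable_line hc 0
  refine this.bdd_mul (c := Real.exp (-L * c)) (by fun_prop) (Eventually.of_forall fun y => ?_)
  rw [norm_exp]
  simp

/-- Moving the inverse Mellin integral from the line `re w = c` to `re w = a`: the residue theorem on
the rectangles `[a, c] × [-T, T]`, with `T → ∞`. -/
lemma contour_shift {M : ℂ → ℂ} (h : StripDecay M) {a c : ℝ} (hac : a < c)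
    (ha : ∀ w : ℂ, w.re = a → AnalyticAt ℂ M w) (hc : ∀ w : ℂ, w.re = c → AnalyticAt ℂ M w)
    (S : Finset ℂ) (hS : ∀ u, u ∈ S ↔ ¬ AnalyticAt ℂ M u ∧ a ≤ u.re ∧ u.re ≤ c)
    (k : ℂ → ℕ) (b : ℂ → ℕ → ℂ)
    (hb : ∀ u ∈ S, ∃ h : ℂ → ℂ, AnalyticAt ℂ h u ∧ ∀ᶠ v in 𝓝[≠] u,
      M v = (∑ i ∈ Finset.range (k u + 1), b u i * ((v - u) ^ (i + 1))⁻¹) + h v) (L : ℝ) :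
    (∫ y : ℝ, exp (-L * (c + y * I)) * M (c + y * I)) -
      (∫ y : ℝ, exp (-L * (a + y * I)) * M (a + y * I)) = 2 * Real.pi *
      ∑ u ∈ S, ∑ i ∈ Finset.range (k u + 1),
        b u i * ((-L : ℂ) ^ i / i.factorial * exp (-L * u)) := by
  set J := ∑ u ∈ S, ∑ i ∈ Finset.range (k u + 1),
        b u i * ((-L : ℂ) ^ i / i.factorial * exp (-L * u)) with hJ
  set g : ℂ → ℂ := fun u => exp (-L * u) * M u with hg
  obtain ⟨T₀, C, hT₀, hC⟩ := h a c 0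
  have hev : ∀ᶠ T : ℝ in atTop, rectInt g ⟨a, -T⟩ ⟨c, T⟩ = 2 * Real.pi * I * J := by
    filter_upwards [eventually_gt_atTop T₀] with T hT
    refine rectInt_exp_mul_meromorphic (z := ⟨a, -T⟩) (w := ⟨c, T⟩) hac (by simp; linarith) S
      (fun u hu => ?_) (fun u hur _ huS => ?_) k b hb L
    · obtain ⟨h1, h2, h3⟩ := (hS u).1 hu
      refine ⟨⟨h2.lt_of_ne fun e => h1 (ha u e.symm), h3.lt_of_ne fun e => h1 (hc u e)⟩, ?_⟩
      have : |u.im| < T := by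
        by_contra h4
        exact h1 (hC u h2 h3 (hT.le.trans (not_lt.1 h4))).1
      exact abs_lt.1 this
    · by_contra h1
      exact huS ((hS u).2 ⟨h1, hur.1, hur.2⟩)
  have hlim : Tendsto (fun T : ℝ => rectInt g ⟨a, -T⟩ ⟨c, T⟩) atTop
      (𝓝 (0 - 0 + I • (∫ y : ℝ, g (c + y * I)) - I • ∫ y : ℝ, g (a + y * I))) := by
    have v1 := intervalIntegral_tendsto_integral (integrable_exp_line h hc L)
      tendsto_neg_atTop_atBot tendsto_id
    have v2 := intervalIntegral_tendsto_integral (integrable_exp_line h ha L)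
      tendsto_neg_atTop_atBot tendsto_id
    have t1 := tendsto_horizontal h hac.le L (-1) (by simp)
    have t2 := tendsto_horizontal h hac.le L 1 (by simp)
    simp only [neg_one_mul, one_mul] at t1 t2
    exact ((t1.sub t2).add (v1.const_smul I)).sub (v2.const_smul I)
  have := tendsto_nhds_unique hlim (tendsto_const_nhds.congr' (hev.mono fun _ h => h.symm))
  simp only [smul_eq_mul] at this
  refine mul_left_cancel₀ I_ne_zero ?_
  linear_combination this

/-! ### From the Mellin transform to the expansion -/

/-- An infinite set with finitely many points in each left half-plane can be listed as a sequence
whose real parts tend to infinity. -/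
lemma exists_enum {P : Set ℂ} (hinf : P.Infinite) (hfin : ∀ R : ℝ, {z ∈ P | z.re ≤ R}.Finite) :
    ∃ α : ℕ → ℂ, Function.Injective α ∧ range α = P ∧
      Tendsto (fun j => (α j).re) atTop atTop := by
  have hc : P.Countable := by
    refine (countable_iUnion fun n : ℕ => (hfin n).countable).mono fun z hz => ?_
    obtain ⟨n, hn⟩ := exists_nat_ge z.re
    exact mem_iUnion.2 ⟨n, hz, hn⟩
  have := hc.to_subtype
  have := hinf.to_subtype
  obtain ⟨e⟩ := nonempty_equiv_of_countable (α := ℕ) (β := P)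
  have hinj : Function.Injective fun j => (e j : ℂ) := Subtype.val_injective.comp e.injective
  refine ⟨fun j => e j, hinj, ?_, ?_⟩
  · rw [show (fun j => (e j : ℂ)) = Subtype.val ∘ e from rfl, e.surjective.range_comp]
    exact Subtype.range_coe
  · rw [tendsto_atTop]
    intro R
    rw [← Nat.cofinite_eq_atTop]
    refine ((hfin R).preimage hinj.injOn).subset fun j hj => ?_
    have hj' : ¬ R ≤ (e j : ℂ).re := hj
    exact ⟨(e j).2, (not_le.1 hj').le⟩

lemma cpow_neg_eq_exp {t : ℝ} (ht : 0 < t) (w : ℂ) :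
    (t : ℂ) ^ (-w) = exp (-(Real.log t : ℝ) * w) := by
  rw [cpow_def_of_ne_zero (by exact_mod_cast ht.ne'), ← ofReal_log ht.le]
  ring_nf

/-- The expansion in terms of Mathlib's Mellin transform: `M` continues `mellin f` from a half-plane
and decays rapidly on vertical strips. -/
theorem expansion_of_stripDecay {f : ℝ → ℂ} (hf : ∀ t, 0 < t → ContinuousAt f t) {M : ℂ → ℂ}
    (hM : ∀ w, MeromorphicAt M w) (hdec : StripDecay M) {q : ℝ}
    (hconv : ∀ w : ℂ, q < w.re → MellinConvergent f w)
    (hagree : ∀ w : ℂ, q < w.re → M w = mellin f w) :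
    ∃ (α : ℕ → ℂ) (k : ℕ → ℕ) (a : ℕ → ℕ → ℂ),
      Tendsto (fun j => (α j).re) atTop atTop ∧
      ∀ N : ℕ, ∀ K : ℝ, 0 < K → ∃ C : ℝ, ∀ t : ℝ, 0 < t → t ≤ 1 →
        ‖iteratedDerivWithin N
            (fun u : ℝ => f u -
              ∑ᶠ (j : ℕ) (_ : (α j).re ≤ (N : ℝ) + K),
                ∑ i ∈ Finset.range (k j + 1),
                  a j i * (u : ℂ) ^ (α j) * (Complex.ofReal (Real.log u)) ^ i)
            (Ioi 0) t‖
          ≤ C * t ^ K := by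
  classical
  obtain ⟨c, hqc, hcq1, hcgood⟩ := hdec.exists_good_line hM (lt_add_one q)
  have hcl : ∀ w : ℂ, w.re = c → AnalyticAt ℂ M w := fun w hw =>
    hcgood w hw.ge (by rw [hw]; exact hcq1)
  have hinv : ∀ t : ℝ, 0 < t → f t =
      1 / (2 * Real.pi) * ∫ y : ℝ, exp (-(Real.log t : ℝ) * (c + y * I)) * M (c + y * I) := by
    intro t ht
    have hline : ∀ y : ℝ, mellin f (c + y * I) = M (c + y * I) := fun y =>
      (hagree _ (by simpa using hqc)).symm
    have hvi : VerticalIntegrable (mellin f) c := by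
      simp only [VerticalIntegrable, hline]
      simpa using hdec.integrable_line hcl 0
    rw [← mellinInv_mellin_eq c f ht (hconv c (by simpa using hqc)) hvi (hf t ht), mellinInv]
    simp only [hline, cpow_neg_eq_exp ht, smul_eq_mul, real_smul]
    push_cast
    rfl
  -- The only points at which residues can occur when the line `re w = c` moves to the left.
  set B : Set ℂ := {w | ¬ AnalyticAt ℂ M w ∧ w.re ≤ c} with hB
  choose k b hb using fun w => exists_principalPart (hM w)
  -- The point `w` produces the exponent `-w`. Since `B` may be finite, the natural numbers are added
  -- to make the set of exponents infinite; those outside `-B` get coefficient `0` below.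
  obtain ⟨α, hαinj, hαrange, hαtend⟩ := exists_enum (P := range (Nat.cast : ℕ → ℂ) ∪ -B)
    ((infinite_range_of_injective Nat.cast_injective).mono subset_union_left) (by
      intro R
      have h1 : ((Nat.cast : ℕ → ℂ) '' {n : ℕ | (n : ℝ) ≤ R}).Finite := by
        refine Set.Finite.image _ ((Set.finite_Iic ⌊R⌋₊).subset fun n hn => ?_)
        exact Nat.le_floor hn
      have h2 := (hdec.finite hM (-R) c).neg
      refine (h1.union h2).subset ?_
      rintro z ⟨⟨n, rfl⟩ | hz, hR⟩
      · exact Or.inl ⟨n, by simpa using hR, rfl⟩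
      · exact Or.inr ⟨hz.1, by simpa using hR, hz.2⟩)
  -- The residue at `w` is `b w i * (-log t) ^ i / i! * t ^ (-w)`, whence the sign `(-1) ^ i`.
  refine ⟨α, fun j => k (-α j), fun j i => if -α j ∈ B then
    b (-α j) i * ((-1) ^ i / i.factorial) else 0, hαtend, fun N K _ => ?_⟩
  -- An exponent satisfies `re α ≤ N + K` exactly when the corresponding point has `re w ≥ R`. The new
  -- line `re w = a` lies so close to `min R c` that no point is crossed with `re w < R`.
  set R : ℝ := -(N + K) with hR
  obtain ⟨a, -, haR, hagood⟩ := hdec.exists_good_line hM (A := min R c - 1) (R := min R c)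
    (by linarith)
  have haR' : a < R := haR.trans_le (min_le_left _ _)
  have hac : a < c := haR.trans_le (min_le_right _ _)
  have hal : ∀ w : ℂ, w.re = a → AnalyticAt ℂ M w := fun w hw => hagood w hw.ge (hw ▸ haR)
  set S := (hdec.finite hM a c).toFinset with hSdef
  have hS : ∀ u, u ∈ S ↔ ¬ AnalyticAt ℂ M u ∧ a ≤ u.re ∧ u.re ≤ c := by simp [hSdef]
  have hSR : ∀ u ∈ S, R ≤ u.re := by
    intro u hu
    obtain ⟨h1, h2, h3⟩ := (hS u).1 hu
    -- Otherwise `u` would lie in the strip `a ≤ re w < min R c`, where `M` is analytic.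
    by_contra h4
    exact h1 (hagood u h2 (lt_min (not_le.1 h4) (h3.lt_of_ne fun e => h1 (hcl u e))))
  have hfinJ : {j : ℕ | (α j).re ≤ N + K}.Finite := by
    have := (hαtend.eventually_gt_atTop (N + K))
    rw [← Nat.cofinite_eq_atTop] at this
    simpa [eventually_cofinite] using this
  have hsum : ∀ u : ℝ, 0 < u → ∑ᶠ (j : ℕ) (_ : (α j).re ≤ (N : ℝ) + K),
      ∑ i ∈ Finset.range (k (-α j) + 1), (if -α j ∈ B then
        b (-α j) i * ((-1) ^ i / i.factorial) else 0) * (u : ℂ) ^ (α j) *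
          (Complex.ofReal (Real.log u)) ^ i =
      ∑ w ∈ S, ∑ i ∈ Finset.range (k w + 1),
        b w i * ((-(Real.log u : ℝ) : ℂ) ^ i / i.factorial * exp (-(Real.log u : ℝ) * w)) := by
    intro u hu
    set Y : ℂ → ℂ := fun w => ∑ i ∈ Finset.range (k w + 1), (if w ∈ B then
        b w i * ((-1) ^ i / i.factorial) else 0) * (u : ℂ) ^ (-w) *
          (Complex.ofReal (Real.log u)) ^ i with hY
    have e1 : ∑ᶠ (j : ℕ) (_ : (α j).re ≤ (N : ℝ) + K),
      ∑ i ∈ Finset.range (k (-α j) + 1), (if -α j ∈ B then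
        b (-α j) i * ((-1) ^ i / i.factorial) else 0) * (u : ℂ) ^ (α j) *
          (Complex.ofReal (Real.log u)) ^ i = ∑ j ∈ hfinJ.toFinset, Y (-α j) := by
      rw [← finsum_mem_eq_finite_toFinset_sum (fun j => Y (-α j)) hfinJ]
      simp only [hY, neg_neg, mem_ofPred_eq]
    rw [e1, ← Finset.sum_image (f := Y) (g := fun j => -α j)
      (fun i _ j _ h => hαinj (neg_injective h))]
    have hsub : S ⊆ hfinJ.toFinset.image fun j => -α j := by
      intro w hw
      have hwB : w ∈ B := ⟨((hS w).1 hw).1, ((hS w).1 hw).2.2⟩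
      have : -w ∈ range α := by
        rw [hαrange]; exact Or.inr (by simpa using hwB)
      obtain ⟨j, hj⟩ := this
      refine Finset.mem_image.2 ⟨j, ?_, by rw [hj, neg_neg]⟩
      simp only [Finite.mem_toFinset, mem_ofPred_eq, hj, neg_re]
      have := hSR w hw
      linarith
    rw [← Finset.sum_subset hsub]
    · refine Finset.sum_congr rfl fun w hw => Finset.sum_congr rfl fun i _ => ?_
      have hwB : w ∈ B := ⟨((hS w).1 hw).1, ((hS w).1 hw).2.2⟩
      rw [if_pos hwB, cpow_neg_eq_exp hu, neg_pow ((Real.log u : ℝ) : ℂ)]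
      ring
    · -- an exponent whose point is not in `S` is pure padding
      intro w hw hwS
      refine Finset.sum_eq_zero fun i _ => ?_
      rw [if_neg, zero_mul, zero_mul]
      intro hwB
      obtain ⟨j, hj, rfl⟩ := Finset.mem_image.1 hw
      simp only [Finite.mem_toFinset, mem_ofPred_eq] at hj
      refine hwS ((hS _).2 ⟨hwB.1, ?_, hwB.2⟩)
      rw [neg_re]
      linarith
  have hrem : EqOn (fun u : ℝ => f u - ∑ᶠ (j : ℕ) (_ : (α j).re ≤ (N : ℝ) + K),
      ∑ i ∈ Finset.range (k (-α j) + 1), (if -α j ∈ B then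
        b (-α j) i * ((-1) ^ i / i.factorial) else 0) * (u : ℂ) ^ (α j) *
          (Complex.ofReal (Real.log u)) ^ i)
      (fun u : ℝ => ∫ y : ℝ, (u : ℂ) ^ (-(a + y * I)) * (1 / (2 * Real.pi) * M (a + y * I)))
      (Ioi 0) := by
    intro u hu
    have hu' : 0 < u := hu
    have hpi : (2 * Real.pi : ℂ) ≠ 0 := by
      exact_mod_cast (by positivity : (2 * Real.pi : ℝ) ≠ 0)
    have hshift := contour_shift hdec hac hal hcl S hS k b (fun w _ => hb w) (Real.log u)
    have e2 : ∀ y : ℝ, (u : ℂ) ^ (-(a + y * I)) * (1 / (2 * Real.pi) * M (a + y * I)) =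
        1 / (2 * Real.pi) * (exp (-(Real.log u : ℝ) * (a + y * I)) * M (a + y * I)) := fun y => by
      rw [cpow_neg_eq_exp hu']; ring
    simp only [hsum u hu', hinv u hu', e2]
    rw [MeasureTheory.integral_const_mul, sub_eq_iff_eq_add, ← sub_eq_iff_eq_add', ← mul_sub, hshift]
    field_simp
  obtain ⟨C, hC⟩ := iteratedDerivWithin_vert_integral_bound N
    (fun y => 1 / (2 * Real.pi) * M (a + y * I)) a (fun n =>
      ((hdec.integrable_line hal n).const_mul (1 / (2 * Real.pi))).congr
        (Eventually.of_forall fun y => by ring))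
  -- The bound is `C * t ^ (-a - N)`, and `K ≤ -a - N` because `a < R = -(N + K)`.
  refine ⟨|C|, fun t ht ht1 => ?_⟩
  rw [iteratedDerivWithin_congr hrem ht]
  refine (hC t ht).trans (mul_le_mul (le_abs_self C) ?_ (by positivity) (abs_nonneg C))
  exact Real.rpow_le_rpow_of_exponent_ge ht ht1 (by linarith)

/-- Transfer of the decay hypothesis through the substitution `s = 2 * w - 1`, which turns
`t ^ ((s - 1) / 2)` into the Mellin kernel `t ^ (w - 1)`. -/
lemma stripDecay_comp {G : ℂ → ℂ}
    (hstrip : ∀ A B : ℝ, A ≤ B → ∀ N : ℝ, 0 < N → ∃ s₀ C : ℝ, 0 < s₀ ∧ 0 < C ∧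
      ∀ s : ℂ, A ≤ s.re → s.re ≤ B → s₀ ≤ |s.im| →
        DifferentiableAt ℂ G s ∧ ‖G s‖ ≤ C * ‖s‖ ^ (-N)) :
    StripDecay fun w => G (2 * w - 1) := by
  intro A B N
  rcases lt_or_ge B A with hBA | hAB
  · exact ⟨1, 0, one_pos, fun w h1 h2 => absurd (h1.trans h2) (not_le.2 hBA)⟩
  -- The strip `2 * A - 1 ≤ re s ≤ 2 * B - 1` is enlarged so as to lie in the interior: analyticity
  -- requires differentiability on a neighbourhood. The exponent `N + 1` is positive, as required.
  obtain ⟨s₀, C, hs₀, hC, h⟩ := hstrip (2 * A - 2) (2 * B) (by linarith) (N + 1) (by positivity)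
  refine ⟨max s₀ 1, C, by positivity, fun w h1 h2 h3 => ?_⟩
  have h3a : s₀ ≤ |w.im| := (le_max_left _ _).trans h3
  have h3b : 1 ≤ |w.im| := (le_max_right _ _).trans h3
  have hre : (2 * w - 1).re = 2 * w.re - 1 := by simp
  have him : |(2 * w - 1).im| = 2 * |w.im| := by simp [abs_mul]
  constructor
  · have hopen : IsOpen {s : ℂ | 2 * A - 2 < s.re ∧ s.re < 2 * B ∧ s₀ < |s.im|} :=
      (isOpen_lt continuous_const continuous_re).inter
        ((isOpen_lt continuous_re continuous_const).inter
          (isOpen_lt continuous_const continuous_im.abs))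
    have hmem : 2 * w - 1 ∈ {s : ℂ | 2 * A - 2 < s.re ∧ s.re < 2 * B ∧ s₀ < |s.im|} := by
      refine ⟨?_, ?_, ?_⟩ <;> (first | rw [hre] | rw [him]) <;> linarith
    have hd : AnalyticAt ℂ G (2 * w - 1) :=
      DifferentiableOn.analyticAt (s := {s : ℂ | 2 * A - 2 < s.re ∧ s.re < 2 * B ∧ s₀ < |s.im|})
        (fun s hs => (h s hs.1.le hs.2.1.le hs.2.2.le).1.differentiableWithinAt)
        (hopen.mem_nhds hmem)
    exact AnalyticAt.fun_comp (f := fun w : ℂ => 2 * w - 1) hd (by fun_prop)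
  · have hb := (h (2 * w - 1) (by rw [hre]; linarith) (by rw [hre]; linarith)
      (by rw [him]; linarith)).2
    have hnorm : |w.im| ≤ ‖2 * w - 1‖ := by
      have := abs_im_le_norm (2 * w - 1)
      rw [him] at this
      linarith
    have hpos : 0 < ‖2 * w - 1‖ := by linarith
    have hle : |w.im| ^ N ≤ ‖2 * w - 1‖ ^ ((N : ℝ) + 1) := by
      rw [← Nat.cast_succ, Real.rpow_natCast]
      calc |w.im| ^ N ≤ |w.im| ^ (N + 1) := pow_le_pow_right₀ h3b (Nat.le_succ N)
        _ ≤ _ := by gcongr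
    calc ‖G (2 * w - 1)‖ * |w.im| ^ N
        ≤ C * ‖2 * w - 1‖ ^ (-((N : ℝ) + 1)) * ‖2 * w - 1‖ ^ ((N : ℝ) + 1) :=
          mul_le_mul hb hle (by positivity) (by positivity)
      _ = C := by rw [mul_assoc, ← Real.rpow_add hpos]; simp

end Aux

/-- (Implication (ii) ⇒ (i) of the equivalence lemma.)
If `f : (0,∞) → ℂ` is smooth, all of whose derivatives decay exponentially at
`∞` and blow up at worst polynomially at `0`, if the Mellin-type transform
`G(s) = ∫₀^∞ t^((s-1)/2) f(t) dt` converges absolutely for `Re s > p` and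
extends to a meromorphic function `G̃` on `ℂ` which decays faster than any
negative power of `|s|` on finite vertical strips, then `f` admits a
differentiable short-time asymptotic expansion
`f(t) ∼ ∑_{j,i} a j i · t^(α j) · (log t)^i` with `Re (α j) → ∞`. -/
theorem statement8 (f : ℝ → ℂ) (hf : ContDiffOn ℝ (⊤ : ℕ∞) f (Ioi 0))
    (hdecay : ∀ N : ℕ, ∃ C ε : ℝ, 0 < C ∧ 0 < ε ∧ ∀ t : ℝ, 1 ≤ t →
      ‖iteratedDerivWithin N f (Ioi 0) t‖ ≤ C * Real.exp (-ε * t))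
    (hblow : ∀ N : ℕ, ∃ C r : ℝ, 0 ≤ r ∧ ∀ t : ℝ, 0 < t → t ≤ 1 →
      ‖iteratedDerivWithin N f (Ioi 0) t‖ ≤ C * t ^ (-r))
    (p : ℝ)
    (hint : ∀ s : ℂ, p < s.re →
      IntegrableOn (fun t : ℝ => (t : ℂ) ^ ((s - 1) / 2) * f t) (Ioi 0))
    (G : ℂ → ℂ)
    (hmero : MeromorphicOn G Set.univ)
    (hagree : ∀ s : ℂ, p < s.re →
      G s = ∫ t in Ioi (0 : ℝ), (t : ℂ) ^ ((s - 1) / 2) * f t)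
    (hstrip : ∀ A B : ℝ, A ≤ B → ∀ N : ℝ, 0 < N → ∃ s₀ C : ℝ, 0 < s₀ ∧ 0 < C ∧
      ∀ s : ℂ, A ≤ s.re → s.re ≤ B → s₀ ≤ |s.im| →
        DifferentiableAt ℂ G s ∧ ‖G s‖ ≤ C * ‖s‖ ^ (-N)) :
    ∃ (α : ℕ → ℂ) (k : ℕ → ℕ) (a : ℕ → ℕ → ℂ),
      Tendsto (fun j => (α j).re) atTop atTop ∧
      ∀ N : ℕ, ∀ K : ℝ, 0 < K → ∃ C : ℝ, ∀ t : ℝ, 0 < t → t ≤ 1 →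
        ‖iteratedDerivWithin N
            (fun u : ℝ => f u -
              ∑ᶠ (j : ℕ) (_ : (α j).re ≤ (N : ℝ) + K),
                ∑ i ∈ Finset.range (k j + 1),
                  a j i * (u : ℂ) ^ (α j) * (Complex.ofReal (Real.log u)) ^ i)
            (Ioi 0) t‖
          ≤ C * t ^ K := by
  -- Substituting `s = 2 * w - 1` moves the abscissa `p` to `(p + 1) / 2`.
  have hq : ∀ w : ℂ, (p + 1) / 2 < w.re → p < (2 * w - 1).re := fun w hw => by
    simp only [Complex.sub_re, Complex.mul_re, Complex.re_ofNat, Complex.im_ofNat, zero_mul,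
      sub_zero, Complex.one_re]
    linarith
  have hexp : ∀ w : ℂ, (2 * w - 1 - 1) / 2 = w - 1 := fun w => by ring
  refine expansion_of_stripDecay (M := fun w => G (2 * w - 1)) (q := (p + 1) / 2)
    (fun t ht => hf.continuousOn.continuousAt (Ioi_mem_nhds ht)) (fun w => ?_)
    (stripDecay_comp hstrip) (fun w hw => ?_) (fun w hw => ?_)
  · exact (hmero (2 * w - 1) (mem_univ _)).comp_analyticAt (g := fun w : ℂ => 2 * w - 1)
      (by fun_prop)
  · have := hint _ (hq w hw)
    rw [hexp] at this
    exact this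
  · rw [hagree _ (hq w hw), hexp]
    rfl
end
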